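/- arXiv:2202.04026 — 6 statements merged into one kernel-verified Lean document; each statement's English description precedes it below -/
import Mathlib

section
/- Let X* ∈ S_n be a minimizer of a convex function g : 𝕊ⁿ → ℝ over S_n with rank(X*) = r*, and define the dual function q(Z,s) = inf_{X∈𝕊ⁿ} { g(X) + s·(1 − Tr(X)) − ⟨Z,X⟩ } for Z ∈ 𝕊ⁿ, s ∈ ℝ (values in ℝ ∪ {−∞}). Then for any δ > 0 the following are equivalent: (i) there exist Z* ∈ 𝕊ⁿ with Z* ⪰ 0 and s* ∈ ℝ such that q(Z*,s*) = g(X*) (i.e., (Z*,s*) is an optimal dual solution attaining the primal optimal value), rank(Z*) = n − r*, and λ_{n−r*}(Z*) ≥ δ; (ii) there exists G* ∈ ∂g(X*) such that ⟨X − X*, G*⟩ ≥ 0 for all X ∈ S_n and λ_{n−r*}(G*) − λ_n(G*) ≥ δ. -/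
open scoped BigOperators RealInnerProductSpace
open Matrix

noncomputable section

abbrev Mat (n : ℕ) := Matrix (Fin n) (Fin n) ℝ
abbrev Vec (m : ℕ) := EuclideanSpace ℝ (Fin m)

/-- Trace inner product `⟨A,B⟩ = Tr(AB)`. -/
def mip {n : ℕ} (A B : Mat n) : ℝ := (A * B).trace

/-- Frobenius norm. -/
def frob {n : ℕ} (A : Mat n) : ℝ := Real.sqrt (∑ i, ∑ j, (A i j) ^ 2)

/-- The set of symmetric `n × n` real matrices (the space `𝕊ⁿ`). -/
def SymM (n : ℕ) : Set (Mat n) := {X | X.IsSymm}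

/-- The spectrahedron `S_n`. -/
def Spectra (n : ℕ) : Set (Mat n) := {X | X.trace = 1 ∧ X.PosSemidef}

/-- `lam A k` : the `k`-th largest eigenvalue of a symmetric matrix `A` (1-indexed,
so `lam A 1 = λ₁(A)` is the largest and `lam A n = λₙ(A)` is the smallest);
junk value otherwise. -/
def lam {n : ℕ} (A : Mat n) (k : ℕ) : ℝ :=
  if h : k - 1 < n then
    if hA : A.IsHermitian then
      hA.eigenvalues (Tuple.sort hA.eigenvalues (Fin.rev ⟨k - 1, h⟩))
    else 0
  else 0

/-- Multiplicity of the smallest eigenvalue of `A`. -/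
def multMin {n : ℕ} (A : Mat n) : ℕ :=
  letI := Classical.decPred fun k : ℕ => lam A k = lam A n
  ((Finset.Icc 1 n).filter fun k => lam A k = lam A n).card

/-- Subdifferential of `g : 𝕊ⁿ → ℝ` at `X`. -/
def subdiff {n : ℕ} (g : Mat n → ℝ) (X : Mat n) : Set (Mat n) :=
  {G | G.IsSymm ∧ ∀ Y ∈ SymM n, g Y ≥ g X + mip G (Y - X)}

/-- Euclidean (Frobenius-norm) projection onto `C ⊆ 𝕊ⁿ`. -/
def mproj {n : ℕ} (C : Set (Mat n)) (X : Mat n) : Mat n :=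
  Classical.epsilon fun P => P ∈ C ∧ ∀ Q ∈ C, frob (X - P) ≤ frob (X - Q)

/-- Euclidean projection onto `C ⊆ ℝᵐ`. -/
def vproj {m : ℕ} (C : Set (Vec m)) (x : Vec m) : Vec m :=
  Classical.epsilon fun p => p ∈ C ∧ ∀ q ∈ C, ‖x - p‖ ≤ ‖x - q‖

/-- Norm on the product space `𝕊ⁿ × ℝᵐ`. -/
def pnorm {n m : ℕ} (X : Mat n) (y : Vec m) : ℝ := Real.sqrt (frob X ^ 2 + ‖y‖ ^ 2)

open Polynomial in
theorem aux_roots_sub {n : ℕ} (A : Mat n) (hA : A.IsHermitian) (c : ℝ) :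
    (A - Matrix.scalar (Fin n) c).charpoly.roots
      = Multiset.map (fun i => hA.eigenvalues i - c) Finset.univ.val := by
  rw [Matrix.charpoly_sub_scalar, hA.charpoly_eq, Polynomial.prod_comp]
  have : ∀ i, (X - C ((hA.eigenvalues i : ℝ) : ℝ)).comp (X + C c)
      = X - C (hA.eigenvalues i - c) := by
    intro i
    simp
    ring
  have h2 : (∏ i, (X - C ((RCLike.ofReal (hA.eigenvalues i) : ℝ))).comp (X + C c))
      = ∏ i, (X - C (hA.eigenvalues i - c)) := Finset.prod_congr rfl (fun i _ => this i)
  rw [h2, Polynomial.roots_prod]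
  · simp only [Polynomial.roots_X_sub_C, Multiset.bind_singleton]
  · exact Finset.prod_ne_zero_iff.2 (fun i _ => Polynomial.X_sub_C_ne_zero _)

theorem aux_sort_eq {n : ℕ} (f h : Fin n → ℝ)
    (e : Multiset.map f Finset.univ.val = Multiset.map h Finset.univ.val) :
    f ∘ Tuple.sort f = h ∘ Tuple.sort h := by
  rw [← List.ofFn_inj]
  apply List.Perm.eq_of_sortedLE
  · exact (Tuple.monotone_sort f).sortedLE_ofFn
  · exact (Tuple.monotone_sort h).sortedLE_ofFn
  · refine (Equiv.Perm.ofFn_comp_perm _ _).trans (List.Perm.trans ?_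
      (Equiv.Perm.ofFn_comp_perm _ _).symm)
    rw [Fin.univ_val_map, Fin.univ_val_map] at e
    exact Multiset.coe_eq_coe.1 e

theorem aux_herm_sub {n : ℕ} (A : Mat n) (hA : A.IsHermitian) (c : ℝ) :
    (A - Matrix.scalar (Fin n) c).IsHermitian := by
  apply hA.sub
  simp [Matrix.IsHermitian, Matrix.diagonal_transpose]

theorem aux_lam_sub {n : ℕ} (A : Mat n) (hA : A.IsHermitian) (c : ℝ) (k : ℕ) (hk : k - 1 < n) :
    lam (A - Matrix.scalar (Fin n) c) k = lam A k - c := by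
  have hB := aux_herm_sub A hA c
  unfold lam
  rw [dif_pos hk, dif_pos hk, dif_pos hA, dif_pos hB]
  have h1 := hB.roots_charpoly_eq_eigenvalues
  rw [aux_roots_sub A hA c] at h1
  have h2 := aux_sort_eq _ _ h1.symm
  have h3 : (fun i => hA.eigenvalues i - c) ∘ Tuple.sort hA.eigenvalues
      = (fun i => hA.eigenvalues i - c) ∘ Tuple.sort (fun i => hA.eigenvalues i - c) := by
    rw [Tuple.comp_sort_eq_comp_iff_monotone]
    intro i j hij
    have := Tuple.monotone_sort hA.eigenvalues hij
    simp only [Function.comp_apply] at this ⊢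
    linarith
  have h4 := congrFun (h2.trans h3.symm) (Fin.rev ⟨k - 1, hk⟩)
  simpa using h4

/-- `lam A n` is a lower bound of the eigenvalues. -/
theorem aux_lam_le {n : ℕ} (hn : 2 ≤ n) (A : Mat n) (hA : A.IsHermitian) (i : Fin n) :
    lam A n ≤ hA.eigenvalues i := by
  have hk : n - 1 < n := by omega
  unfold lam
  rw [dif_pos hk, dif_pos hA]
  have := Tuple.monotone_sort hA.eigenvalues
    (show (Fin.rev ⟨n - 1, hk⟩ : Fin n) ≤ (Tuple.sort hA.eigenvalues).symm i by
      rw [Fin.le_def, Fin.val_rev]; simp; omega)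
  simpa using this

theorem aux_lam_exists {n : ℕ} (A : Mat n) (hA : A.IsHermitian) (k : ℕ) (hk : k - 1 < n) :
    ∃ i, hA.eigenvalues i = lam A k := by
  unfold lam
  rw [dif_pos hk, dif_pos hA]
  exact ⟨_, rfl⟩

theorem aux_rank_ge {n : ℕ} (A : Mat n) (hA : A.IsHermitian) (k : ℕ) (hk : k ≤ n)
    (hpos : 0 < lam A k) : k ≤ A.rank := by
  rcases Nat.eq_zero_or_pos k with rfl | hk0
  · exact Nat.zero_le _
  have hk1 : k - 1 < n := by omega
  unfold lam at hpos
  rw [dif_pos hk1, dif_pos hA] at hpos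
  have key : ∀ j : Fin k, hA.eigenvalues (Tuple.sort hA.eigenvalues
      (Fin.rev (Fin.castLE hk j))) ≠ 0 := by
    intro j
    have := Tuple.monotone_sort hA.eigenvalues
      (show (Fin.rev ⟨k - 1, hk1⟩ : Fin n) ≤ Fin.rev (Fin.castLE hk j) by
        rw [Fin.rev_le_rev, Fin.le_def]; simp; omega)
    simp only [Function.comp_apply] at this
    exact (lt_of_lt_of_le hpos this).ne'
  rw [hA.rank_eq_card_non_zero_eigs]
  have := Fintype.card_le_of_injective
    (fun j : Fin k => (⟨_, key j⟩ : {i // hA.eigenvalues i ≠ 0})) (by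
      intro a b hab
      simpa using hab)
  simpa using this

open scoped MatrixOrder in
theorem aux_psd_mul {n : ℕ} (Z X : Mat n) (hZ : Z.PosSemidef) (hX : X.PosSemidef) :
    0 ≤ mip Z X ∧ (mip Z X = 0 → Z * X = 0) := by
  obtain ⟨B, rfl⟩ := CStarAlgebra.nonneg_iff_eq_star_mul_self.mp hZ.nonneg
  obtain ⟨C, rfl⟩ := CStarAlgebra.nonneg_iff_eq_star_mul_self.mp hX.nonneg
  have e : mip (star B * B) (star C * C) = ((B * Cᴴ)ᴴ * (B * Cᴴ)).trace := by
    unfold mip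
    rw [← Matrix.mul_assoc, Matrix.trace_mul_comm]
    simp [Matrix.star_eq_conjTranspose, Matrix.mul_assoc]
  constructor
  · rw [e]
    exact (Matrix.posSemidef_conjTranspose_mul_self _).trace_nonneg
  · intro h
    rw [e, Matrix.trace_conjTranspose_mul_self_eq_zero_iff] at h
    calc star B * B * (star C * C) = star B * (B * Cᴴ) * C := by
          simp [Matrix.star_eq_conjTranspose, Matrix.mul_assoc]
      _ = 0 := by rw [h]; simp

theorem aux_mip_add {n : ℕ} (A B C : Mat n) : mip (A + B) C = mip A C + mip B C := by
  simp [mip, Matrix.add_mul]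

theorem aux_mip_sub {n : ℕ} (A B C : Mat n) : mip (A - B) C = mip A C - mip B C := by
  simp [mip, Matrix.sub_mul]

theorem aux_mip_comm {n : ℕ} (A B : Mat n) : mip A B = mip B A := Matrix.trace_mul_comm _ _

theorem aux_mip_scalar {n : ℕ} (c : ℝ) (B : Mat n) :
    mip (Matrix.scalar (Fin n) c) B = c * B.trace := by
  simp [mip, Matrix.trace, Finset.mul_sum]

theorem aux_min_vec {n : ℕ} (A : Mat n) (hA : A.IsHermitian) (i : Fin n) :
    ∃ X ∈ Spectra n, mip X A = hA.eigenvalues i := by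
  have hv := hA.mulVec_eigenvectorBasis i
  have h1 : (hA.eigenvectorBasis i).ofLp ⬝ᵥ (hA.eigenvectorBasis i).ofLp = 1 := by
    have h := hA.eigenvectorBasis.orthonormal.1 i
    have h2 : inner ℝ (hA.eigenvectorBasis i) (hA.eigenvectorBasis i) = (1 : ℝ) := by
      rw [real_inner_self_eq_norm_sq, h]; norm_num
    rw [EuclideanSpace.inner_eq_star_dotProduct] at h2
    simpa using h2
  generalize (hA.eigenvectorBasis i).ofLp = v at hv h1
  refine ⟨Matrix.vecMulVec v v, ⟨?_, ?_⟩, ?_⟩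
  · rw [Matrix.trace_vecMulVec, h1]
  · simpa using Matrix.posSemidef_vecMulVec_self_star v
  · rw [aux_mip_comm]
    unfold mip
    rw [Matrix.mul_vecMulVec, hv, Matrix.trace_vecMulVec, smul_dotProduct, h1]
    simp

theorem stmt_0 {n : ℕ} (hn : 2 ≤ n) (g : Mat n → ℝ)
    (hg : ConvexOn ℝ (SymM n) g)
    (Xs : Mat n) (hXsS : Xs ∈ Spectra n)
    (hmin : ∀ X ∈ Spectra n, g Xs ≤ g X)
    (rs : ℕ) (hrank : Xs.rank = rs)
    (δ : ℝ) (hδ : 0 < δ) :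
    (∃ (Z : Mat n) (s : ℝ), Z.PosSemidef ∧
        sInf ((fun X => ((g X + s * (1 - X.trace) - mip Z X : ℝ) : EReal)) '' SymM n)
          = ((g Xs : ℝ) : EReal) ∧
        Z.rank = n - rs ∧ lam Z (n - rs) ≥ δ) ↔
    (∃ G ∈ subdiff g Xs, (∀ X ∈ Spectra n, mip (X - Xs) G ≥ 0) ∧
        lam G (n - rs) - lam G n ≥ δ) := by
  have hXsym : Xs ∈ SymM n := Matrix.isHermitian_iff_isSymm.1 hXsS.2.1
  have htr := hXsS.1
  have hrs0 : 1 ≤ rs := by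
    by_contra h
    have h0 : Xs.rank = 0 := by omega
    have : Xs = 0 := by
      rw [hXsS.2.1.rank_eq_card_non_zero_eigs, Fintype.card_eq_zero_iff] at h0
      rw [← hXsS.2.1.eigenvalues_eq_zero_iff]
      funext i
      by_contra hi
      exact h0.elim ⟨i, hi⟩
    rw [this] at htr
    simp at htr
  have hrsn : rs ≤ n := by
    rw [← hrank]; simpa using Xs.rank_le_width
  have hk1 : n - rs - 1 < n := by omega
  have hk2 : n - 1 < n := by omega
  constructor
  · rintro ⟨Z, s, hZ, hq, hr, hl⟩
    have hle : ∀ X ∈ SymM n, g Xs ≤ g X + s * (1 - X.trace) - mip Z X := by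
      intro X hX
      have := sInf_le (Set.mem_image_of_mem
        (fun X => ((g X + s * (1 - X.trace) - mip Z X : ℝ) : EReal)) hX)
      rw [hq] at this
      exact EReal.coe_le_coe_iff.1 this
    have h0 : mip Z Xs = 0 := by
      have h1 := hle Xs hXsym
      have h2 := (aux_psd_mul Z Xs hZ hXsS.2).1
      rw [htr] at h1
      linarith
    have hGh := aux_herm_sub Z hZ.1 (-s)
    refine ⟨Z - Matrix.scalar (Fin n) (-s),
      ⟨Matrix.isHermitian_iff_isSymm.1 hGh, ?_⟩, ?_, ?_⟩
    · intro Y hY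
      have h1 := hle Y hY
      have h2 : mip Z (Y - Xs) = mip Z Y - mip Z Xs := by
        rw [aux_mip_comm, aux_mip_sub, aux_mip_comm Y, aux_mip_comm Xs]
      rw [aux_mip_sub, aux_mip_scalar, h2, h0, Matrix.trace_sub, htr]
      linarith
    · intro X hX
      rw [aux_mip_comm, aux_mip_sub, aux_mip_scalar, Matrix.trace_sub, htr, hX.1, aux_mip_comm,
        aux_mip_sub, aux_mip_comm Xs, h0, aux_mip_comm]
      have := (aux_psd_mul Z X hZ hX.2).1
      linarith
    · rw [aux_lam_sub Z hZ.1 _ _ hk1, aux_lam_sub Z hZ.1 _ _ hk2]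
      have : lam Z n ≤ 0 := by
        by_contra h
        have := aux_rank_ge Z hZ.1 n le_rfl (not_le.1 h)
        omega
      linarith
  · rintro ⟨G, ⟨hGs, hsub⟩, hopt, hl⟩
    have hG : G.IsHermitian := Matrix.isHermitian_iff_isSymm.2 hGs
    have hZh := aux_herm_sub G hG (lam G n)
    have hlk := aux_lam_sub G hG (lam G n) _ hk1
    have hln := aux_lam_sub G hG (lam G n) _ hk2
    have hZ : (G - Matrix.scalar (Fin n) (lam G n)).PosSemidef := by
      rw [hZh.posSemidef_iff_eigenvalues_nonneg]
      intro i
      have := aux_lam_le hn _ hZh i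
      rw [hln] at this
      simpa using this
    have h0 : mip (G - Matrix.scalar (Fin n) (lam G n)) Xs = 0 := by
      have h2 := (aux_psd_mul _ Xs hZ hXsS.2).1
      obtain ⟨i, hi⟩ := aux_lam_exists G hG n hk2
      obtain ⟨X, hX, hXe⟩ := aux_min_vec G hG i
      have h3 := hopt X hX
      rw [aux_mip_sub, hXe, hi, aux_mip_comm] at h3
      refine le_antisymm ?_ h2
      rw [aux_mip_sub, aux_mip_scalar, htr]
      linarith
    refine ⟨_, lam G n, hZ, ?_, ?_, ?_⟩
    · apply le_antisymm
      · apply sInf_le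
        refine ⟨Xs, hXsym, ?_⟩
        simp only [h0, htr]
        norm_num
      · apply le_sInf
        rintro _ ⟨X, hX, rfl⟩
        apply EReal.coe_le_coe_iff.2
        have h1 := hsub X hX
        have h2 : mip G (X - Xs) = mip G X - mip G Xs := by
          rw [aux_mip_comm, aux_mip_sub, aux_mip_comm X, aux_mip_comm Xs]
        rw [aux_mip_sub, aux_mip_scalar, htr] at h0
        rw [aux_mip_sub, aux_mip_scalar]
        linarith
    · apply le_antisymm
      · have := Matrix.rank_add_rank_le_card_of_mul_eq_zero
          ((aux_psd_mul _ Xs hZ hXsS.2).2 h0)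
        rw [hrank, Fintype.card_fin] at this
        omega
      · apply aux_rank_ge _ hZh _ (by omega)
        rw [hlk]
        linarith
    · rw [hlk]
      exact hl
end
end

section
/- Let g : 𝕊ⁿ → ℝ be convex and let X* ∈ S_n be a minimizer of g over S_n with rank(X*) = r*. Then: (a) there exists at least one G* ∈ ∂g(X*) such that ⟨X − X*, G*⟩ ≥ 0 for all X ∈ S_n; and (b) every such subgradient G* satisfies G* v = λ_n(G*)·v for every eigenvector v of X* corresponding to a nonzero eigenvalue of X*; equivalently, the column space of X* is contained in the eigenspace of G* associated with its smallest eigenvalue λ_n(G*). -/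
open scoped BigOperators RealInnerProductSpace
open Matrix

noncomputable section

/-- Existence of a subgradient certifying optimality over a convex set. -/
theorem aux_subgrad {E : Type*} [NormedAddCommGroup E] [NormedSpace ℝ E] [FiniteDimensional ℝ E]
    (h : E → ℝ) (hh : ConvexOn ℝ Set.univ h) (C : Set E) (hC : Convex ℝ C) (x : E) (hx : x ∈ C)
    (hmin : ∀ y ∈ C, h x ≤ h y) :
    ∃ L : E →ₗ[ℝ] ℝ, (∀ y, h x + L (y - x) ≤ h y) ∧ ∀ y ∈ C, 0 ≤ L (y - x) := by
  have hcont : Continuous h := hh.locallyLipschitz.continuous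
  have h1 : Convex ℝ {p : E × ℝ | p.1 ∈ Set.univ ∧ h p.1 < p.2} := hh.convex_strict_epigraph
  have h2 : IsOpen {p : E × ℝ | p.1 ∈ Set.univ ∧ h p.1 < p.2} := by
    simp only [Set.mem_univ, true_and]
    exact isOpen_lt (hcont.comp continuous_fst) continuous_snd
  have h3 : Convex ℝ (C ×ˢ Set.Iic (h x)) := hC.prod (convex_Iic _)
  have h4 : Disjoint {p : E × ℝ | p.1 ∈ Set.univ ∧ h p.1 < p.2} (C ×ˢ Set.Iic (h x)) := by
    rw [Set.disjoint_left]
    rintro ⟨y, t⟩ ⟨-, hy⟩ ⟨hyC, ht⟩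
    have := hmin y hyC
    simp only [Set.mem_Iic] at hy ht
    linarith
  obtain ⟨f, u, hf1, hf2⟩ := geometric_hahn_banach_open h1 h2 h3 h4
  have hdec : ∀ y t, f (y, t) = f (y, 0) + t * f (0, 1) := by
    intro y t
    have : ((y, t) : E × ℝ) = (y, 0) + t • (0, 1) := by simp
    rw [this, map_add, map_smul, smul_eq_mul]
  set c := f (0, 1) with hc
  have hA : ∀ y t, h y < t → f (y, 0) + t * c < u := fun y t hyt => by
    rw [← hdec]; exact hf1 _ ⟨trivial, hyt⟩
  have hB : ∀ y ∈ C, u ≤ f (y, 0) + h x * c := fun y hy => by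
    rw [← hdec]; exact hf2 _ ⟨hy, Set.mem_Iic.2 (le_refl _)⟩
  have hcneg : c < 0 := by
    have a := hA x (h x + 1) (by linarith)
    have b := hB x hx
    nlinarith
  have hA' : ∀ y, f (y, 0) + h y * c ≤ u := by
    intro y
    refine le_of_forall_pos_le_add fun ε hε => ?_
    have := hA y (h y + ε / (-c)) (by have := div_pos hε (neg_pos.2 hcneg); linarith)
    have e : (h y + ε / (-c)) * c = h y * c - ε := by
      have hc0 : c ≠ 0 := hcneg.ne
      field_simp
      ring
    linarith
  have hlin : ∀ y, f (y - x, 0) = f (y, 0) - f (x, 0) := by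
    intro y
    rw [← map_sub]; simp
  refine ⟨(-c)⁻¹ • ((f : E × ℝ →ₗ[ℝ] ℝ).comp (LinearMap.inl ℝ E ℝ)), ?_, ?_⟩
  · intro y
    have a := hA' y
    have b := hB x hx
    simp only [LinearMap.smul_apply, LinearMap.comp_apply, LinearMap.inl_apply, smul_eq_mul,
      ContinuousLinearMap.coe_coe, hlin]
    have : (-c)⁻¹ * (f (y, 0) - f (x, 0)) ≤ h y - h x := by
      rw [inv_mul_le_iff₀ (by linarith)]
      nlinarith
    linarith
  · intro y hy
    have a := hA' x
    have b := hB y hy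
    simp only [LinearMap.smul_apply, LinearMap.comp_apply, LinearMap.inl_apply, smul_eq_mul,
      ContinuousLinearMap.coe_coe, hlin]
    exact mul_nonneg (inv_nonneg.2 (by linarith)) (by linarith)

theorem aux_convex_spectra (n : ℕ) : Convex ℝ (Spectra n) := by
  intro X hX Y hY a b ha hb hab
  refine ⟨?_, (hX.2.smul ha).add (hY.2.smul hb)⟩
  rw [trace_add, trace_smul, trace_smul, hX.1, hY.1]
  simpa using hab

open scoped MatrixOrder in
theorem aux_fact {n : ℕ} (A : Mat n) (hA : A.PosSemidef) : ∃ B : Mat n, A = Bᴴ * B :=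
  CStarAlgebra.nonneg_iff_eq_star_mul_self.mp hA.nonneg

attribute [local instance] Matrix.normedAddCommGroup Matrix.normedSpace

theorem aux_a {n : ℕ} (g : Mat n → ℝ)
    (hg : ConvexOn ℝ (SymM n) g)
    (Xs : Mat n) (hXsS : Xs ∈ Spectra n)
    (hmin : ∀ X ∈ Spectra n, g Xs ≤ g X) :
    ∃ G ∈ subdiff g Xs, ∀ X ∈ Spectra n, mip (X - Xs) G ≥ 0 := by
  let S : Mat n →ₗ[ℝ] Mat n := (2⁻¹ : ℝ) • (LinearMap.id + (Matrix.transposeLinearEquiv (Fin n) (Fin n) ℝ ℝ).toLinearMap)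
  have hS : ∀ A, S A = (2⁻¹ : ℝ) • (A + Aᵀ) := fun A => rfl
  have hSsym : ∀ A, S A ∈ SymM n := fun A => by
    show (S A)ᵀ = S A
    rw [hS]; simp [add_comm]
  have hSid : ∀ A ∈ SymM n, S A = A := fun A hA => by
    have hA : Aᵀ = A := hA
    rw [hS, hA, ← two_smul ℝ A, smul_smul]; norm_num
  have hsp : ∀ X ∈ Spectra n, X ∈ SymM n := fun X hX => by
    have := hX.2.1
    show Xᵀ = X
    simpa [Matrix.IsHermitian, conjTranspose_eq_transpose_of_trivial] using this
  have hconv : ConvexOn ℝ Set.univ (g ∘ S) := by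
    refine (hg.comp_linearMap S).subset (fun A _ => hSsym A) convex_univ
  obtain ⟨L, hL1, hL2⟩ := aux_subgrad (g ∘ S) hconv (Spectra n) (aux_convex_spectra n) Xs hXsS
    (fun y hy => by
      simp only [Function.comp, hSid _ (hsp _ hXsS), hSid _ (hsp _ hy)]; exact hmin y hy)
  have key : ∀ Y ∈ SymM n, mip (Matrix.of fun i j => L (S (Matrix.single i j 1))) Y = L Y := by
    intro Y hY
    have e : Y = ∑ i, ∑ j, Y i j • Matrix.single i j (1 : ℝ) := by
      conv_lhs => rw [Matrix.matrix_eq_sum_single Y]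
      simp [Matrix.smul_single]
    have hYt : ∀ i j, Y j i = Y i j := fun i j => congrFun (congrFun hY i) j
    conv_rhs => rw [← hSid Y hY, e]
    simp only [map_sum, map_smul, smul_eq_mul, mip, Matrix.trace, Matrix.diag, Matrix.mul_apply,
      Matrix.of_apply]
    refine Finset.sum_congr rfl fun i _ => Finset.sum_congr rfl fun j _ => ?_
    rw [hYt, mul_comm]
  have hsub : ∀ Y ∈ SymM n, Y - Xs ∈ SymM n := fun Y hY =>
    Matrix.IsSymm.sub hY (hsp _ hXsS)
  refine ⟨Matrix.of fun i j => L (S (Matrix.single i j 1)), ⟨?_, ?_⟩, ?_⟩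
  · ext i j
    simp only [Matrix.transpose_apply, Matrix.of_apply, hS, Matrix.transpose_single]
    rw [add_comm]
  · intro Y hY
    rw [key _ (hsub Y hY)]
    have := hL1 Y
    simpa only [Function.comp, hSid _ (hsp _ hXsS), hSid _ hY] using this
  · intro X hX
    rw [aux_mip_comm, key _ (hsub X (hsp X hX))]
    exact hL2 X hX

theorem aux_lam {n : ℕ} (hn : 2 ≤ n) (G : Mat n) (hG : G.IsHermitian) :
    ∃ i, lam G n = hG.eigenvalues i ∧ ∀ j, lam G n ≤ hG.eigenvalues j := by
  have h : n - 1 < n := by omega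
  have hl : lam G n = hG.eigenvalues (Tuple.sort hG.eigenvalues (Fin.rev ⟨n - 1, h⟩)) := by
    rw [lam, dif_pos h, dif_pos hG]
  refine ⟨_, hl, fun j => ?_⟩
  rw [hl]
  have hm := Tuple.monotone_sort hG.eigenvalues
  have := @hm (Fin.rev ⟨n - 1, h⟩) ((Tuple.sort hG.eigenvalues).symm j) (by
    rw [Fin.le_def, Fin.val_rev]; simp only; omega)
  simpa using this

theorem aux_b {n : ℕ} (hn : 2 ≤ n) (Xs : Mat n) (hXsS : Xs ∈ Spectra n)
    (G : Mat n) (hGs : G.IsSymm) (hopt : ∀ X ∈ Spectra n, mip (X - Xs) G ≥ 0)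
    (v : Fin n → ℝ) (μ : ℝ) (hμ : μ ≠ 0) (hv : Xs.mulVec v = μ • v) :
    G.mulVec v = lam G n • v := by
  have hG : G.IsHermitian := by
    rw [Matrix.IsHermitian, conjTranspose_eq_transpose_of_trivial]
    exact hGs
  obtain ⟨i, hi, hle⟩ := aux_lam hn G hG
  set l := lam G n with hl
  have hM : (G - algebraMap ℝ (Mat n) l).PosSemidef := by
    have hH : (G - algebraMap ℝ (Mat n) l).IsHermitian := by
      refine hG.sub ?_
      rw [Algebra.algebraMap_eq_smul_one]
      simp [Matrix.IsHermitian]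
    rw [hH.posSemidef_iff_eigenvalues_nonneg]
    intro j
    have := hH.eigenvalues_mem_spectrum_real j
    rw [← spectrum.sub_singleton_eq, hG.spectrum_real_eq_range_eigenvalues] at this
    obtain ⟨_, ⟨k, rfl⟩, _, rfl, e⟩ := this
    have := hle k
    simp only at e
    rw [← e]
    simpa using this
  -- rank-one test matrix
  set w : Fin n → ℝ := ⇑(hG.eigenvectorBasis i) with hw
  have hGw : G *ᵥ w = l • w := by rw [hi]; exact hG.mulVec_eigenvectorBasis i
  have hww : w ⬝ᵥ w = 1 := by
    have := hG.eigenvectorBasis.orthonormal.1 i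
    rw [EuclideanSpace.norm_eq, Real.sqrt_eq_one] at this
    simpa [dotProduct, sq] using this
  have hS : vecMulVec w w ∈ Spectra n := by
    refine ⟨by rw [trace_vecMulVec, hww], ?_⟩
    simpa using posSemidef_vecMulVec_self_star w
  have h1 := hopt _ hS
  have h2 : mip (vecMulVec w w) G = l := by
    rw [aux_mip_comm, mip, mul_vecMulVec, hGw, trace_vecMulVec, smul_dotProduct, hww]; simp
  have h3 : mip (vecMulVec w w - Xs) G = l - mip Xs G := by
    rw [← h2, mip, mip, mip, sub_mul, trace_sub]
  have h4 : (Xs * (G - algebraMap ℝ (Mat n) l)).trace ≤ 0 := by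
    rw [mul_sub, trace_sub, Algebra.algebraMap_eq_smul_one, mul_smul_comm, mul_one, trace_smul,
      hXsS.1]
    rw [h3] at h1
    simp only [mip] at h1
    simp
    linarith
  obtain ⟨B, hB⟩ := aux_fact _ hXsS.2
  obtain ⟨D, hD⟩ := aux_fact _ hM
  have h5 : (Xs * (G - algebraMap ℝ (Mat n) l)).trace = ((B * Dᴴ)ᴴ * (B * Dᴴ)).trace := by
    rw [hB, hD, conjTranspose_mul, conjTranspose_conjTranspose]
    rw [← Matrix.mul_assoc, Matrix.trace_mul_comm]
    simp only [Matrix.mul_assoc]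
  have h6 : B * Dᴴ = 0 := by
    rw [← trace_conjTranspose_mul_self_eq_zero_iff]
    refine le_antisymm (h5 ▸ h4) (posSemidef_conjTranspose_mul_self _).trace_nonneg
  have h7 : D * Bᴴ = 0 := by
    have := congrArg conjTranspose h6
    simpa using this
  have h8 : (G - algebraMap ℝ (Mat n) l) * Xs = 0 := by
    rw [hB, hD, Matrix.mul_assoc, ← Matrix.mul_assoc D, h7]; simp
  have h9 : (G - algebraMap ℝ (Mat n) l) *ᵥ (Xs *ᵥ v) = 0 := by
    rw [mulVec_mulVec, h8, zero_mulVec]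
  rw [hv, mulVec_smul, smul_eq_zero, or_iff_right hμ, sub_mulVec, sub_eq_zero,
    Algebra.algebraMap_eq_smul_one, smul_mulVec, one_mulVec] at h9
  exact h9

theorem stmt_1 {n : ℕ} (hn : 2 ≤ n) (g : Mat n → ℝ)
    (hg : ConvexOn ℝ (SymM n) g)
    (Xs : Mat n) (hXsS : Xs ∈ Spectra n)
    (hmin : ∀ X ∈ Spectra n, g Xs ≤ g X)
    (rs : ℕ) (hrank : Xs.rank = rs) :
    (∃ G ∈ subdiff g Xs, ∀ X ∈ Spectra n, mip (X - Xs) G ≥ 0) ∧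
    (∀ G ∈ subdiff g Xs, (∀ X ∈ Spectra n, mip (X - Xs) G ≥ 0) →
      ∀ (v : Fin n → ℝ) (μ : ℝ), v ≠ 0 → μ ≠ 0 → Xs.mulVec v = μ • v →
        G.mulVec v = lam G n • v) := by
  exact ⟨aux_a g hg Xs hXsS hmin, fun G hG hopt v μ _ hμ hv =>
    aux_b hn Xs hXsS G hG.1 hopt v μ hμ hv⟩
end
end

section
/- Let g : 𝕊ⁿ → ℝ be convex, let X* ∈ S_n be a minimizer of g over S_n with rank(X*) = r* < n, and let G* ∈ ∂g(X*) satisfy ⟨X − X*, G*⟩ ≥ 0 for all X ∈ S_n. Fix any η > 0. Then λ_{n−r*}(G*) = λ_n(G*) if and only if for every ζ > 0 it holds that rank( Π_{(1+ζ)S_n}[ X* − η G* ] ) > r*, where (1+ζ)S_n = {X ∈ 𝕊ⁿ : Tr(X) = 1+ζ, X ⪰ 0} and Π_{(1+ζ)S_n} denotes Euclidean (Frobenius-norm) projection onto this set. -/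
open scoped BigOperators RealInnerProductSpace
open Matrix

noncomputable section

theorem frob_le_iff {n : ℕ} (A B : Mat n) :
    frob A ≤ frob B ↔ (Aᵀ * A).trace ≤ (Bᵀ * B).trace := by
  have h : ∀ A : Mat n, ∑ i, ∑ j, (A i j) ^ 2 = (Aᵀ * A).trace := by
    intro A
    rw [Finset.sum_comm]
    simp [Matrix.trace, Matrix.mul_apply, sq]
  unfold frob
  rw [h, h]
  apply Real.sqrt_le_sqrt_iff
  rw [← h]; positivity

theorem trace_sq_nonneg {n : ℕ} (A : Mat n) : 0 ≤ (Aᵀ * A).trace := by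
  simp only [Matrix.trace, Matrix.mul_apply, Matrix.diag, Matrix.transpose_apply]
  exact Finset.sum_nonneg fun i _ => Finset.sum_nonneg fun j _ => mul_self_nonneg _

theorem trace_sq_expand {n : ℕ} (A B : Mat n) (t : ℝ) :
    ((A + t • B)ᵀ * (A + t • B)).trace
      = (Aᵀ * A).trace + 2 * t * (Aᵀ * B).trace + t ^ 2 * (Bᵀ * B).trace := by
  have h : (Bᵀ * A).trace = (Aᵀ * B).trace := by
    rw [← Matrix.trace_transpose, Matrix.transpose_mul, Matrix.transpose_transpose]
  simp only [Matrix.transpose_add, Matrix.transpose_smul, Matrix.add_mul, Matrix.mul_add,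
    Matrix.trace_add, Matrix.smul_mul, Matrix.mul_smul, Matrix.trace_smul, smul_eq_mul, h]
  ring

/-- variational inequality -/
theorem vi {n : ℕ} (Y P Q : Mat n) (C : Set (Mat n)) (hC : Convex ℝ C) (hP : P ∈ C) (hQ : Q ∈ C)
    (hmin : ∀ Q ∈ C, frob (Y - P) ≤ frob (Y - Q)) : 0 ≤ ((P - Y)ᵀ * (Q - P)).trace := by
  by_contra hneg
  push Not at hneg
  set a := ((P - Y)ᵀ * (Q - P)).trace with ha
  set b := ((Q - P)ᵀ * (Q - P)).trace with hb
  have hb0 : 0 ≤ b := trace_sq_nonneg _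
  have key : ∀ t : ℝ, 0 < t → t ≤ 1 → 0 ≤ 2 * a + t * b := by
    intro t ht0 ht1
    have hm : P + t • (Q - P) ∈ C := hC.add_smul_sub_mem hP hQ ⟨ht0.le, ht1⟩
    have h := (frob_le_iff _ _).1 (hmin _ hm)
    have e1 : Y - P = -(P - Y) := by abel
    have e2 : Y - (P + t • (Q - P)) = -((P - Y) + t • (Q - P)) := by abel
    rw [e1, e2] at h
    simp only [Matrix.transpose_neg, neg_mul_neg] at h
    rw [trace_sq_expand] at h
    have : 0 ≤ t * (2 * a + t * b) := by rw [ha, hb]; linarith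
    exact nonneg_of_mul_nonneg_right this ht0
  have h1 := key (min 1 (-a / (b + 1))) (by
    apply lt_min one_pos; apply div_pos <;> linarith) (min_le_left _ _)
  have h2 : min 1 (-a / (b + 1)) * b ≤ -a := by
    calc min 1 (-a / (b + 1)) * b ≤ (-a / (b + 1)) * (b + 1) := by
          apply mul_le_mul (min_le_right _ _) (by linarith) hb0
          apply div_nonneg <;> linarith
      _ = -a := by field_simp
  linarith

theorem proj_unique {n : ℕ} (Y P : Mat n) (C : Set (Mat n)) (hP : P ∈ C)
    (h : ∀ Q ∈ C, 0 ≤ ((P - Y)ᵀ * (Q - P)).trace) : mproj C Y = P := by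
  have hex : ∀ Q ∈ C, (( Y - P)ᵀ * (Y - P)).trace + ((Q - P)ᵀ * (Q - P)).trace
      ≤ ((Y - Q)ᵀ * (Y - Q)).trace := by
    intro Q hQ
    have e1 : Y - P = -(P - Y) := by abel
    have e2 : Y - Q = -((P - Y) + (1 : ℝ) • (Q - P)) := by rw [one_smul]; abel
    rw [e1, e2]
    simp only [Matrix.transpose_neg, neg_mul_neg]
    rw [trace_sq_expand]
    have := h Q hQ
    linarith
  have hE : ∃ P, P ∈ C ∧ ∀ Q ∈ C, frob (Y - P) ≤ frob (Y - Q) := by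
    refine ⟨P, hP, fun Q hQ => (frob_le_iff _ _).2 ?_⟩
    have := hex Q hQ
    have := trace_sq_nonneg (Q - P)
    linarith
  obtain ⟨h1, h2⟩ := Classical.epsilon_spec hE
  change mproj C Y ∈ C at h1
  have h3 := (frob_le_iff _ _).1 (h2 P hP)
  change ((Y - mproj C Y)ᵀ * (Y - mproj C Y)).trace ≤ _ at h3
  have h4 := hex _ h1
  have h5 := trace_sq_nonneg (mproj C Y - P)
  have h6 : ((mproj C Y - P)ᵀ * (mproj C Y - P)).trace = 0 := by linarith
  have := (Matrix.trace_conjTranspose_mul_self_eq_zero_iff (A := mproj C Y - P)).1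
    (by simpa [Matrix.conjTranspose_eq_transpose_of_trivial] using h6)
  exact sub_eq_zero.1 this

theorem proj_exists {n : ℕ} (Y : Mat n) (C : Set (Mat n)) (hC : IsClosed C) (hne : C.Nonempty) :
    mproj C Y ∈ C ∧ ∀ Q ∈ C, frob (Y - mproj C Y) ≤ frob (Y - Q) := by
  obtain ⟨X0, hX0⟩ := hne
  have hcont : Continuous fun X : Mat n => frob (Y - X) := by
    unfold frob
    apply Real.continuous_sqrt.comp
    refine continuous_finset_sum _ fun i _ => continuous_finset_sum _ fun j _ => ?_
    have : Continuous fun X : Mat n => X i j := continuous_id.matrix_elem i j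
    simp only [Matrix.sub_apply]
    fun_prop
  set R := frob (Y - X0)
  have hK : IsCompact (C ∩ {X | frob (Y - X) ≤ R}) := by
    have hbox : IsCompact (Set.pi Set.univ fun i : Fin n => Set.pi Set.univ fun j : Fin n =>
        Set.Icc (Y i j - R) (Y i j + R) : Set (Fin n → Fin n → ℝ)) :=
      isCompact_univ_pi fun i => isCompact_univ_pi fun j => isCompact_Icc
    refine IsCompact.of_isClosed_subset hbox
      (hC.inter (isClosed_le hcont continuous_const)) ?_
    rintro X ⟨-, hX⟩ i - j -
    have h1 : |Y i j - X i j| ≤ frob (Y - X) := by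
      unfold frob
      apply Real.abs_le_sqrt
      calc (Y i j - X i j) ^ 2 = ((Y - X) i j) ^ 2 := rfl
        _ ≤ ∑ j, ((Y - X) i j) ^ 2 :=
          Finset.single_le_sum (f := fun j => ((Y - X) i j) ^ 2)
            (fun _ _ => sq_nonneg _) (Finset.mem_univ j)
        _ ≤ _ := Finset.single_le_sum (f := fun i => ∑ j, ((Y - X) i j) ^ 2)
            (fun _ _ => Finset.sum_nonneg fun _ _ => sq_nonneg _) (Finset.mem_univ i)
    have h2 := abs_le.1 (h1.trans hX)
    constructor <;> linarith [h2.1, h2.2]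
  obtain ⟨P, hP, hPm⟩ := hK.exists_isMinOn ⟨X0, hX0, le_refl R⟩ hcont.continuousOn
  apply Classical.epsilon_spec (p := fun P => P ∈ C ∧ ∀ Q ∈ C, frob (Y - P) ≤ frob (Y - Q))
  refine ⟨P, hP.1, fun Q hQ => ?_⟩
  by_cases hq : frob (Y - Q) ≤ R
  · exact hPm ⟨hQ, hq⟩
  · exact (show frob (Y - P) ≤ R from hP.2).trans (not_le.1 hq).le

theorem C_closed {n : ℕ} (c : ℝ) : IsClosed {X : Mat n | X.trace = c ∧ X.PosSemidef} := by
  have : {X : Mat n | X.trace = c ∧ X.PosSemidef} =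
      {X | X.trace = c} ∩ ({X | Xᵀ = X} ∩ ⋂ x : Fin n → ℝ, {X | 0 ≤ x ⬝ᵥ X *ᵥ x}) := by
    ext X
    simp [Matrix.posSemidef_iff_dotProduct_mulVec, Matrix.IsHermitian,
      Matrix.conjTranspose_eq_transpose_of_trivial]
  rw [this]
  refine (isClosed_eq (continuous_id.matrix_trace) continuous_const).inter
    ((isClosed_eq continuous_id.matrix_transpose continuous_id).inter
      (isClosed_iInter fun x => isClosed_le continuous_const ?_))
  exact continuous_const.dotProduct (continuous_id.matrix_mulVec continuous_const)

theorem C_convex {n : ℕ} (c : ℝ) : Convex ℝ {X : Mat n | X.trace = c ∧ X.PosSemidef} := by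
  rintro X ⟨hX1, hX2⟩ Y ⟨hY1, hY2⟩ a b ha hb hab
  refine ⟨?_, (hX2.smul ha).add (hY2.smul hb)⟩
  rw [Matrix.trace_add, Matrix.trace_smul, Matrix.trace_smul, hX1, hY1, ← add_smul, hab, one_smul]

theorem spec {n : ℕ} (A : Mat n) (hA : A.IsHermitian) : ∃ U : Mat n, Uᵀ * U = 1 ∧ U * Uᵀ = 1 ∧
    A = U * diagonal hA.eigenvalues * Uᵀ := by
  refine ⟨hA.eigenvectorUnitary, ?_, ?_, ?_⟩
  · exact Unitary.coe_star_mul_self hA.eigenvectorUnitary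
  · exact Unitary.coe_mul_star_self hA.eigenvectorUnitary
  · conv_lhs => rw [hA.spectral_theorem]
    rw [Unitary.conjStarAlgAut_apply]
    rfl

theorem psd_conj {n : ℕ} {A : Mat n} (h : A.PosSemidef) (U : Mat n) : (Uᵀ * A * U).PosSemidef := by
  have := h.conjTranspose_mul_mul_same U
  rwa [Matrix.conjTranspose_eq_transpose_of_trivial] at this

theorem trace_conj {n : ℕ} (A U : Mat n) (h : U * Uᵀ = 1) : (Uᵀ * A * U).trace = A.trace := by
  rw [Matrix.trace_mul_comm, ← Matrix.mul_assoc, h, Matrix.one_mul]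

theorem trace_udu {n : ℕ} (A U : Mat n) (d : Fin n → ℝ) :
    (A * (U * diagonal d * Uᵀ)).trace = ∑ i, d i * (Uᵀ * A * U) i i := by
  rw [← Matrix.mul_assoc, Matrix.trace_mul_comm, ← Matrix.mul_assoc, ← Matrix.mul_assoc]
  simp only [Matrix.trace, Matrix.diag, Matrix.mul_diagonal]
  exact Finset.sum_congr rfl fun i _ => mul_comm _ _

theorem trace_vv {n : ℕ} (A : Mat n) (u : Fin n → ℝ) :
    (A * vecMulVec u u).trace = u ⬝ᵥ A *ᵥ u := by
  rw [Matrix.mul_vecMulVec, Matrix.trace_vecMulVec, dotProduct_comm]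

theorem psd_vv {n : ℕ} (u : Fin n → ℝ) : (vecMulVec u u).PosSemidef := by
  simpa using Matrix.posSemidef_vecMulVec_self_star u

theorem psd_udu {n : ℕ} (U : Mat n) (d : Fin n → ℝ) (hd : ∀ i, 0 ≤ d i) :
    (U * diagonal d * Uᵀ).PosSemidef := by
  have := psd_conj (Matrix.PosSemidef.diagonal (d := d) hd) Uᵀ
  rwa [Matrix.transpose_transpose] at this

theorem lam_lemma {n : ℕ} (G : Mat n) (hG : G.IsHermitian) (rs : ℕ) (h : rs < n) :
    ∃ i0, (∀ i, hG.eigenvalues i0 ≤ hG.eigenvalues i) ∧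
     (lam G (n - rs) = lam G n ↔
       rs < (Finset.univ.filter fun i => hG.eigenvalues i = hG.eigenvalues i0).card) := by
  set e := hG.eigenvalues
  set σ := Tuple.sort e
  have hm : Monotone (e ∘ σ) := Tuple.monotone_sort e
  let z : Fin n := ⟨0, by omega⟩
  let w : Fin n := ⟨rs, h⟩
  have hz : lam G n = e (σ z) := by
    unfold lam
    rw [dif_pos (by omega), dif_pos hG]
    congr 2
    ext; simp [z, Fin.rev]; omega
  have hw : lam G (n - rs) = e (σ w) := by
    unfold lam
    rw [dif_pos (by omega), dif_pos hG]
    congr 2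
    ext; simp [w, Fin.rev]; omega
  have hmin : ∀ j, e (σ z) ≤ e (σ j) := fun j => hm (Fin.mk_le_of_le_val (Nat.zero_le _))
  refine ⟨σ z, fun i => ?_, ?_⟩
  · have := hmin (σ.symm i)
    simpa using this
  rw [hz, hw]
  have hc : (Finset.univ.filter fun i => e i = e (σ z)).card
      = (Finset.univ.filter fun j => e (σ j) = e (σ z)).card := by
    symm
    apply Finset.card_bij (fun j _ => σ j)
    · intro j hj; simpa using hj
    · intro a _ b _ hab; exact σ.injective hab
    · intro b hb; exact ⟨σ.symm b, by simpa using hb, by simp⟩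
  rw [hc]
  constructor
  · intro heq
    have hsub : Finset.Iic w ⊆ Finset.univ.filter fun j => e (σ j) = e (σ z) := by
      intro j hj
      simp only [Finset.mem_Iic] at hj
      simp only [Finset.mem_filter, Finset.mem_univ, true_and]
      exact le_antisymm ((hm hj).trans heq.le) (hmin j)
    have := Finset.card_le_card hsub
    rw [Fin.card_Iic] at this
    exact this
  · intro hlt
    by_contra hne
    have hsub : (Finset.univ.filter fun j => e (σ j) = e (σ z)) ⊆ Finset.Iio w := by
      intro j hj
      simp only [Finset.mem_filter, Finset.mem_univ, true_and] at hj
      simp only [Finset.mem_Iio]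
      by_contra hjw
      exact hne (le_antisymm ((hm (not_lt.1 hjw)).trans hj.le) (hmin w))
    have := Finset.card_le_card hsub
    rw [Fin.card_Iio] at this
    simp only [w] at this
    omega

/-- There is a unit vector in the `μ`-eigenspace of `G` killed by a matrix of small rank. -/
theorem exists_unit {n : ℕ} (P U : Mat n) (hU : Uᵀ * U = 1) (S : Finset (Fin n))
    (h : P.rank < S.card) : ∃ a : Fin n → ℝ, (∀ i, i ∉ S → a i = 0) ∧
      P *ᵥ (U *ᵥ a) = 0 ∧ (U *ᵥ a) ⬝ᵥ (U *ᵥ a) = 1 := by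
  have h1 : ∃ a : Fin n → ℝ, (∀ i, i ∉ S → a i = 0) ∧ P *ᵥ (U *ᵥ a) = 0 ∧ a ≠ 0 := by
    let E : Matrix (Fin n) S ℝ := (1 : Mat n).submatrix id Subtype.val
    let B : Matrix (Fin n) S ℝ := P * (U * E)
    have hr : B.rank ≤ P.rank := Matrix.rank_mul_le_left _ _
    have hk : LinearMap.ker B.mulVecLin ≠ ⊥ := by
      intro hk
      have h2 := LinearMap.finrank_range_add_finrank_ker B.mulVecLin
      rw [hk] at h2
      simp only [finrank_bot, add_zero, Module.finrank_fintype_fun_eq_card, Fintype.card_coe] at h2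
      have : B.rank = S.card := h2
      omega
    obtain ⟨b, hb, hb0⟩ := Submodule.exists_mem_ne_zero_of_ne_bot hk
    have hE : ∀ i, (E *ᵥ b) i = ∑ j : S, if i = j then b j else 0 := by
      intro i
      simp [E, Matrix.mulVec, dotProduct, Matrix.one_apply]
    refine ⟨E *ᵥ b, ?_, ?_, ?_⟩
    · intro i hi
      rw [hE]
      apply Finset.sum_eq_zero
      rintro ⟨j, hj⟩ -
      rw [if_neg]
      rintro rfl; exact hi hj
    · have : B *ᵥ b = 0 := hb
      simpa [B, Matrix.mulVec_mulVec] using this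
    · intro h0
      apply hb0
      ext j
      have := congrFun h0 j
      rw [hE] at this
      simpa [Subtype.coe_inj] using this
  obtain ⟨a, ha, hPa, ha0⟩ := h1
  have hn : (U *ᵥ a) ⬝ᵥ (U *ᵥ a) = a ⬝ᵥ a := by
    rw [Matrix.dotProduct_mulVec, ← Matrix.mulVec_transpose, Matrix.mulVec_mulVec, hU,
      Matrix.one_mulVec]
  have hpos : 0 < a ⬝ᵥ a := by
    have : 0 ≤ a ⬝ᵥ a := Finset.sum_nonneg fun i _ => mul_self_nonneg _
    exact lt_of_le_of_ne this fun h => ha0 (dotProduct_self_eq_zero.1 h.symm)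
  refine ⟨(Real.sqrt (a ⬝ᵥ a))⁻¹ • a, ?_, ?_, ?_⟩
  · intro i hi; simp [ha i hi]
  · rw [Matrix.mulVec_smul, Matrix.mulVec_smul, hPa, smul_zero]
  · rw [Matrix.mulVec_smul, smul_dotProduct, dotProduct_smul, hn, smul_eq_mul, smul_eq_mul,
      ← mul_assoc, ← mul_inv, Real.mul_self_sqrt hpos.le, inv_mul_cancel₀ hpos.ne']

theorem forward {n : ℕ} (Xs G U : Mat n) (e : Fin n → ℝ) (i0 : Fin n)
    (hX : Xs.PosSemidef) (hXt : Xs.trace = 1) (hGs : Gᵀ = G)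
    (hU : Uᵀ * U = 1) (hU' : U * Uᵀ = 1) (hGU : G = U * diagonal e * Uᵀ)
    (hmin : ∀ i, e i0 ≤ e i) (rs : ℕ)
    (hc : rs < (Finset.univ.filter fun i => e i = e i0).card)
    (η : ℝ) (hη : 0 < η) (ζ : ℝ) (hζ : 0 < ζ) :
    rs < (mproj {X : Mat n | X.trace = 1 + ζ ∧ X.PosSemidef} (Xs - η • G)).rank := by
  set C := {X : Mat n | X.trace = 1 + ζ ∧ X.PosSemidef} with hC
  set Y := Xs - η • G with hY
  have hne : C.Nonempty := by
    refine ⟨(1 + ζ) • Xs, ?_, hX.smul (by linarith)⟩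
    rw [Matrix.trace_smul, hXt, smul_eq_mul, mul_one]
  obtain ⟨hPC, hPm⟩ := proj_exists Y C (C_closed _) hne
  set P := mproj C Y
  obtain ⟨hPt, hPp⟩ := hPC
  by_contra hlt
  push Not at hlt
  obtain ⟨a, ha, hPu, huu⟩ := exists_unit P U hU _ (lt_of_le_of_lt hlt hc)
  set u := U *ᵥ a
  have hGu : G *ᵥ u = e i0 • u := by
    have h1 : diagonal e *ᵥ a = e i0 • a := by
      ext i
      rw [Matrix.mulVec_diagonal, Pi.smul_apply, smul_eq_mul]
      by_cases hi : e i = e i0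
      · rw [hi]
      · rw [ha i (by simpa using hi)]; simp
    rw [hGU]
    simp only [u]
    rw [Matrix.mulVec_mulVec, Matrix.mul_assoc, Matrix.mul_assoc, hU, Matrix.mul_one,
      ← Matrix.mulVec_mulVec, h1, Matrix.mulVec_smul]
  have hH : (G - e i0 • (1 : Mat n)).PosSemidef := by
    have h1 := psd_udu U (fun i => e i - e i0) (fun i => sub_nonneg.2 (hmin i))
    have h2 : (diagonal fun i => e i - e i0) = diagonal e - e i0 • (1 : Mat n) := by
      ext i j
      by_cases hij : i = j <;> simp [hij, Matrix.one_apply]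
    rw [h2, Matrix.mul_sub, Matrix.sub_mul, ← hGU, Matrix.mul_smul, Matrix.smul_mul,
      Matrix.mul_one, hU'] at h1
    exact h1
  obtain ⟨V, hV, hV', hPV⟩ := spec P hPp.1
  set p := hPp.1.eigenvalues
  have hp : ∀ i, 0 ≤ p i := fun i => hPp.eigenvalues_nonneg i
  have hPd : Vᵀ * P * V = diagonal p := by
    rw [hPV, ← Matrix.mul_assoc, ← Matrix.mul_assoc, hV, Matrix.one_mul, Matrix.mul_assoc, hV,
      Matrix.mul_one]
  have key : ∀ i, p i ≤ (Vᵀ * Xs * V) i i := by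
    intro i
    rcases (hp i).eq_or_lt with h0 | hpos
    · rw [← h0]; exact (psd_conj hX V).diag_nonneg
    have hQeq : V * diagonal (Function.update p i 0) * Vᵀ - P
        = V * diagonal (Pi.single i (-p i)) * Vᵀ := by
      conv_lhs => rw [hPV]
      rw [← Matrix.sub_mul, ← Matrix.mul_sub, Matrix.diagonal_sub]
      congr 3
      ext j
      by_cases hj : j = i
      · subst hj; simp
      · simp [hj]
    have hQ : V * diagonal (Function.update p i 0) * Vᵀ + p i • vecMulVec u u ∈ C := by
      refine ⟨?_, (psd_udu V _ ?_).add ((psd_vv u).smul hpos.le)⟩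
      · have h3 := congrArg Matrix.trace hQeq
        have h4 : (V * diagonal (Pi.single i (-p i)) * Vᵀ).trace = - p i := by
          rw [Matrix.trace_mul_comm, ← Matrix.mul_assoc, hV, Matrix.one_mul, Matrix.trace_diagonal]
          simp
        rw [Matrix.trace_sub, h4, hPt] at h3
        rw [Matrix.trace_add, Matrix.trace_smul, Matrix.trace_vecMulVec, huu, smul_eq_mul]
        linarith
      · intro j
        by_cases hj : j = i
        · subst hj; simp
        · simp [hj, hp j]
    have h5 := vi Y P _ C (C_convex _) ⟨hPt, hPp⟩ hQ hPm
    have hXsT : Xsᵀ = Xs := by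
      have := hX.1; rwa [Matrix.IsHermitian, Matrix.conjTranspose_eq_transpose_of_trivial] at this
    have hPT : Pᵀ = P := by
      have := hPp.1; rwa [Matrix.IsHermitian, Matrix.conjTranspose_eq_transpose_of_trivial] at this
    have hMT : (P - Y)ᵀ = P - Xs + η • G := by
      rw [hY, Matrix.transpose_sub, Matrix.transpose_sub, Matrix.transpose_smul, hXsT, hPT, hGs]
      abel
    rw [hMT, add_sub_right_comm, hQeq, Matrix.mul_add, Matrix.trace_add, trace_udu,
      Matrix.mul_smul, Matrix.trace_smul, trace_vv] at h5
    have h6 : ∑ j, (Pi.single i (-p i) : Fin n → ℝ) j * (Vᵀ * (P - Xs + η • G) * V) j j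
        = - p i * (Vᵀ * (P - Xs + η • G) * V) i i := by
      rw [Finset.sum_eq_single i]
      · simp
      · intro j _ hj; simp [hj]
      · simp
    have h7 : u ⬝ᵥ (P - Xs + η • G) *ᵥ u = - (u ⬝ᵥ Xs *ᵥ u) + η * e i0 := by
      rw [Matrix.add_mulVec, Matrix.sub_mulVec, hPu, Matrix.smul_mulVec, hGu]
      simp [dotProduct_add, huu]
    have h8 : 0 ≤ u ⬝ᵥ Xs *ᵥ u := by simpa using hX.dotProduct_mulVec_nonneg u
    have h9 : (Vᵀ * (P - Xs + η • G) * V) i i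
        = p i - (Vᵀ * Xs * V) i i + η * (Vᵀ * G * V) i i := by
      simp only [Matrix.mul_add, Matrix.mul_sub, Matrix.add_mul, Matrix.sub_mul, hPd,
        Matrix.mul_smul, Matrix.smul_mul]
      simp
    have h10 : e i0 ≤ (Vᵀ * G * V) i i := by
      have := (psd_conj hH V).diag_nonneg (i := i)
      simp only [Matrix.mul_sub, Matrix.sub_mul, Matrix.mul_smul, Matrix.smul_mul, Matrix.mul_one,
        hV] at this
      simp at this
      exact this
    rw [h6, h7, h9, smul_eq_mul] at h5
    have h11 : 0 ≤ p i * (-(p i - (Vᵀ * Xs * V) i i + η * (Vᵀ * G * V) i i)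
        + (-(u ⬝ᵥ Xs *ᵥ u) + η * e i0)) := by linarith
    have h12 := nonneg_of_mul_nonneg_right h11 hpos
    have h13 := mul_le_mul_of_nonneg_left h10 hη.le
    linarith
  have hs : ∑ i, p i ≤ ∑ i, (Vᵀ * Xs * V) i i := Finset.sum_le_sum fun i _ => key i
  have h1 : ∑ i, p i = 1 + ζ := by
    rw [← hPt, ← trace_conj P V hV', hPd, Matrix.trace_diagonal]
  have h2 : ∑ i, (Vᵀ * Xs * V) i i = 1 := by
    rw [← hXt, ← trace_conj Xs V hV']; rfl
  linarith

theorem backward {n : ℕ} (Xs G U : Mat n) (e : Fin n → ℝ) (i0 : Fin n)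
    (hX : Xs.PosSemidef) (hXt : Xs.trace = 1) (hGs : Gᵀ = G)
    (hU : Uᵀ * U = 1) (hU' : U * Uᵀ = 1) (hGU : G = U * diagonal e * Uᵀ)
    (hmin : ∀ i, e i0 ≤ e i) (rs : ℕ)
    (hfo : ∀ X ∈ Spectra n, mip (X - Xs) G ≥ 0)
    (hc : (Finset.univ.filter fun i => e i = e i0).card ≤ rs)
    (η : ℝ) (hη : 0 < η) : ∃ ζ : ℝ, 0 < ζ ∧
    (mproj {X : Mat n | X.trace = 1 + ζ ∧ X.PosSemidef} (Xs - η • G)).rank ≤ rs := by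
  set x : Fin n → ℝ := fun i => (Uᵀ * Xs * U) i i with hxdef
  have hx0 : ∀ i, 0 ≤ x i := fun i => (psd_conj hX U).diag_nonneg
  have hxs : ∑ i, x i = 1 := by rw [← hXt, ← trace_conj Xs U hU']; rfl
  have hx : ∀ i, e i ≠ e i0 → x i = 0 := by
    have hD : U * diagonal (Pi.single i0 (1 : ℝ)) * Uᵀ ∈ Spectra n := by
      refine ⟨?_, psd_udu U _ fun i => ?_⟩
      · rw [Matrix.trace_mul_comm, ← Matrix.mul_assoc, hU, Matrix.one_mul, Matrix.trace_diagonal]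
        simp
      · by_cases hi : i = i0
        · subst hi; simp
        · simp [hi]
    have h1 := hfo _ hD
    have h2 : (U * diagonal (Pi.single i0 (1 : ℝ)) * Uᵀ * G).trace = e i0 := by
      rw [Matrix.trace_mul_comm, trace_udu]
      have : Uᵀ * G * U = diagonal e := by
        rw [hGU, ← Matrix.mul_assoc, ← Matrix.mul_assoc, hU, Matrix.one_mul, Matrix.mul_assoc, hU,
          Matrix.mul_one]
      rw [this, Finset.sum_eq_single i0]
      · simp
      · intro j _ hj; simp [hj]
      · simp
    have h3 : (Xs * G).trace = ∑ i, e i * x i := by rw [hGU, trace_udu]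
    rw [mip, Matrix.sub_mul, Matrix.trace_sub, h2, h3] at h1
    have h4 : ∑ i, (e i - e i0) * x i ≤ 0 := by
      simp only [sub_mul, Finset.sum_sub_distrib, ← Finset.mul_sum, hxs]
      linarith
    have h5 : ∀ i ∈ Finset.univ, 0 ≤ (e i - e i0) * x i :=
      fun i _ => mul_nonneg (sub_nonneg.2 (hmin i)) (hx0 i)
    have h6 := (Finset.sum_eq_zero_iff_of_nonneg h5).1 (le_antisymm h4 (Finset.sum_nonneg h5))
    intro i hi
    rcases mul_eq_zero.1 (h6 i (Finset.mem_univ i)) with h | h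
    · exact absurd (sub_eq_zero.1 h) hi
    · exact h
  -- the gap
  obtain ⟨c, hc0, hcg⟩ : ∃ c : ℝ, 0 < c ∧ ∀ i, e i ≠ e i0 → c + η * e i0 ≤ η * e i := by
    by_cases hne : (Finset.univ.filter fun i => e i ≠ e i0).Nonempty
    · obtain ⟨k, hk, hkm⟩ := Finset.exists_min_image _ e hne
      simp only [Finset.mem_filter, Finset.mem_univ, true_and] at hk hkm
      refine ⟨η * (e k - e i0), mul_pos hη (sub_pos.2 (lt_of_le_of_ne (hmin k) hk.symm)), ?_⟩
      intro i hi
      have := mul_le_mul_of_nonneg_left (hkm i hi) hη.le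
      linarith
    · refine ⟨1, one_pos, fun i hi => absurd ⟨i, by simpa using hi⟩ hne⟩
  set S := Finset.univ.filter fun i => e i = e i0 with hS
  have hSpos : 0 < S.card := Finset.card_pos.2 ⟨i0, by simp [hS]⟩
  let d : Fin n → ℝ := fun i => if e i = e i0 then c else 0
  have hd0 : ∀ i, 0 ≤ d i := fun i => by simp only [d]; split_ifs <;> linarith
  have hds : ∑ i, d i = c * S.card := by
    simp only [d]
    rw [← Finset.sum_filter, Finset.sum_const, nsmul_eq_mul, mul_comm]
  refine ⟨c * S.card, mul_pos hc0 (by exact_mod_cast hSpos), ?_⟩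
  set C := {X : Mat n | X.trace = 1 + c * S.card ∧ X.PosSemidef} with hC
  set K := U * diagonal d * Uᵀ with hK
  have hKt : K.trace = c * S.card := by
    rw [hK, Matrix.trace_mul_comm, ← Matrix.mul_assoc, hU, Matrix.one_mul, Matrix.trace_diagonal,
      hds]
  have hPC : Xs + K ∈ C := by
    refine ⟨?_, hX.add (psd_udu U d hd0)⟩
    rw [Matrix.trace_add, hXt, hKt]
  have hKc : Uᵀ * K * U = diagonal d := by
    rw [hK, ← Matrix.mul_assoc, ← Matrix.mul_assoc, hU, Matrix.one_mul, Matrix.mul_assoc, hU,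
      Matrix.mul_one]
  have hproj : mproj C (Xs - η • G) = Xs + K := by
    apply proj_unique _ _ _ hPC
    rintro Q ⟨hQt, hQp⟩
    have hM : Xs + K - (Xs - η • G) = U * diagonal (fun i => d i + η * e i) * Uᵀ := by
      have : (diagonal fun i => d i + η * e i) = diagonal d + η • diagonal e := by
        rw [← Matrix.diagonal_smul, Matrix.diagonal_add]; rfl
      rw [this, Matrix.mul_add, Matrix.add_mul, Matrix.mul_smul, Matrix.smul_mul, ← hGU, ← hK]
      abel
    have hMT : (Xs + K - (Xs - η • G))ᵀ = U * diagonal (fun i => d i + η * e i) * Uᵀ := by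
      rw [hM]
      simp [Matrix.transpose_mul, Matrix.mul_assoc]
    rw [hMT, Matrix.trace_mul_comm, Matrix.sub_mul, Matrix.trace_sub, trace_udu, trace_udu]
    have hl : ∑ i, (d i + η * e i) * (Uᵀ * (Xs + K) * U) i i
        = (c + η * e i0) * (1 + c * S.card) := by
      have h1 : ∀ i, (d i + η * e i) * (Uᵀ * (Xs + K) * U) i i
          = (c + η * e i0) * (Uᵀ * (Xs + K) * U) i i := by
        intro i
        by_cases hi : e i = e i0
        · simp [d, hi]
        · have : (Uᵀ * (Xs + K) * U) i i = 0 := by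
            rw [Matrix.mul_add, Matrix.add_mul, hKc, Matrix.add_apply]
            have := hx i hi
            simp only [hxdef] at this
            rw [this]
            simp [d, hi]
          rw [this]; simp
      rw [Finset.sum_congr rfl fun i _ => h1 i, ← Finset.mul_sum]
      congr 1
      rw [← hPC.1, ← trace_conj (Xs + K) U hU']; rfl
    have hr : (c + η * e i0) * (1 + c * S.card) ≤ ∑ i, (d i + η * e i) * (Uᵀ * Q * U) i i := by
      have : 1 + c * S.card = ∑ i, (Uᵀ * Q * U) i i := by
        rw [← hQt, ← trace_conj Q U hU']; rfl
      rw [this, Finset.mul_sum]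
      apply Finset.sum_le_sum
      intro i _
      apply mul_le_mul_of_nonneg_right _ (psd_conj hQp U).diag_nonneg
      by_cases hi : e i = e i0
      · simp [d, hi]
      · simpa [d, hi] using hcg i hi
    linarith
  rw [hproj]
  -- rank bound
  let D : Fin n → ℝ := fun i => if e i = e i0 then 1 else 0
  have hXU : Xs * U * diagonal D = Xs * U := by
    ext k i
    rw [Matrix.mul_diagonal]
    by_cases hi : e i = e i0
    · simp [D, hi]
    · have h1 := hx i hi
      have h2 : star (fun k => U k i) ⬝ᵥ Xs *ᵥ (fun k => U k i) = 0 := by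
        rw [← h1, hxdef]
        simp only
        rw [Matrix.mul_assoc, Matrix.mul_apply]
        rfl
      have h3 := (hX.dotProduct_mulVec_zero_iff _).1 h2
      have h4 : (Xs * U) k i = 0 := by
        have := congrFun h3 k
        simpa [Matrix.mul_apply, Matrix.mulVec, dotProduct] using this
      rw [h4, zero_mul]
  have hKU : K * U * diagonal D = K * U := by
    rw [hK, Matrix.mul_assoc _ Uᵀ U, hU, Matrix.mul_one, Matrix.mul_assoc,
      Matrix.diagonal_mul_diagonal]
    congr 2
    ext i
    by_cases hi : e i = e i0 <;> simp [D, d, hi]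
  have hfac : Xs + K = (Xs + K) * U * diagonal D * Uᵀ := by
    rw [Matrix.add_mul, Matrix.add_mul, hXU, hKU, ← Matrix.add_mul, Matrix.mul_assoc, hU',
      Matrix.mul_one]
  rw [hfac]
  refine ((Matrix.rank_mul_le_left _ _).trans (Matrix.rank_mul_le_right _ _)).trans ?_
  rw [Matrix.rank_diagonal, Fintype.card_subtype]
  refine le_trans (le_of_eq ?_) hc
  congr 1
  ext i
  simp [D, hS]

theorem stmt_2 {n : ℕ} (hn : 2 ≤ n) (g : Mat n → ℝ)
    (hg : ConvexOn ℝ (SymM n) g)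
    (Xs : Mat n) (hXsS : Xs ∈ Spectra n)
    (hmin : ∀ X ∈ Spectra n, g Xs ≤ g X)
    (rs : ℕ) (hrank : Xs.rank = rs) (hrsn : rs < n)
    (G : Mat n) (hG : G ∈ subdiff g Xs)
    (hfo : ∀ X ∈ Spectra n, mip (X - Xs) G ≥ 0)
    (η : ℝ) (hη : 0 < η) :
    lam G (n - rs) = lam G n ↔
      ∀ ζ : ℝ, 0 < ζ →
        rs < (mproj {X : Mat n | X.trace = 1 + ζ ∧ X.PosSemidef} (Xs - η • G)).rank := by
  have hGs : Gᵀ = G := hG.1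
  have hGh : G.IsHermitian := by
    rw [Matrix.IsHermitian, Matrix.conjTranspose_eq_transpose_of_trivial, hGs]
  obtain ⟨U, hU, hU', hGU⟩ := spec G hGh
  obtain ⟨i0, hi0, hiff⟩ := lam_lemma G hGh rs hrsn
  rw [hiff]
  constructor
  · intro hc ζ hζ
    exact forward Xs G U _ i0 hXsS.2 hXsS.1 hGs hU hU' hGU hi0 rs hc η hη ζ hζ
  · intro h
    by_contra hc
    obtain ⟨ζ, hζ, hr⟩ := backward Xs G U _ i0 hXsS.2 hXsS.1 hGs hU hU' hGU hi0 rs hfo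
      (not_lt.1 hc) η hη
    exact absurd (h ζ hζ) (not_lt.2 hr)
end
end

section
/- For the sparse-PCA objective g(X) = −⟨ zz^⊤ + z⊥z⊥^⊤, X ⟩ + (1/(2k))‖X‖₁ with 1 ≤ k ≤ n/4, the matrix −(1/2)·zz^⊤ is a subgradient of g at zz^⊤ (i.e., −(1/2)zz^⊤ ∈ ∂g(zz^⊤)), it satisfies the first-order optimality condition ⟨X − zz^⊤, −(1/2)zz^⊤⟩ ≥ 0 for all X ∈ S_n (hence zz^⊤ is a rank-one minimizer of g over S_n), and it has the eigen-gap λ_{n−1}(−(1/2)zz^⊤) − λ_n(−(1/2)zz^⊤) = 1/2 > 0, so the optimal solution zz^⊤ satisfies strict complementarity. -/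
open scoped BigOperators RealInnerProductSpace
open Matrix

noncomputable section

theorem aux_mip {n : ℕ} (u : Fin n → ℝ) (X : Mat n) :
    mip (vecMulVec u u) X = ∑ i, ∑ j, u i * u j * X j i := by
  simp [mip, Matrix.trace, Matrix.mul_apply, vecMulVec_apply]

theorem aux_psd {n : ℕ} (X : Mat n) (hX : X.PosSemidef) (u : Fin n → ℝ) :
    ∑ i, ∑ j, u i * u j * X j i ≤ (∑ i, u i * u i) * X.trace := by
  have hs : ∀ i j, X i j = X j i := fun i j => by
    have := hX.1.apply i j
    simpa using this.symm
  have key : ∀ i j, 0 ≤ u i * u i * X j j + u j * u j * X i i - 2 * (u i * u j * X j i) := by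
    intro i j
    have h := hX.dotProduct_mulVec_nonneg (Pi.single j (u i) - Pi.single i (u j))
    simp only [star_trivial, mulVec_sub, dotProduct_sub, sub_dotProduct, mulVec_single,
      single_dotProduct] at h
    simp at h
    have := hs i j
    rw [this] at h
    nlinarith [h]
  have h2 : 0 ≤ ∑ i, ∑ j, (u i * u i * X j j + u j * u j * X i i - 2 * (u i * u j * X j i)) :=
    Finset.sum_nonneg fun i _ => Finset.sum_nonneg fun j _ => key i j
  simp only [Finset.sum_sub_distrib, Finset.sum_add_distrib, ← Finset.mul_sum] at h2
  have e1 : ∑ i, u i * u i * ∑ j, X j j = (∑ i, u i * u i) * X.trace := by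
    rw [Finset.sum_mul]; rfl
  have e2 : ∑ i, ∑ j, u j * u j * X i i = (∑ i, u i * u i) * X.trace := by
    simp only [← Finset.sum_mul]
    rw [← Finset.mul_sum]; rfl
  rw [e1, e2] at h2
  linarith

theorem aux_lam_s3 {n : ℕ} (hn : 4 ≤ n) (A : Mat n) (hA : A.IsHermitian)
    (hsq : A * A = (-(1 / 2) : ℝ) • A) (htr : A.trace = -(1 / 2)) :
    lam A (n - 1) - lam A n = 1 / 2 := by
  have hev : ∀ i, hA.eigenvalues i = 0 ∨ hA.eigenvalues i = -(1 / 2) := by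
    intro i
    have h1 := hA.mulVec_eigenvectorBasis i
    have h2 : (A * A) *ᵥ ⇑(hA.eigenvectorBasis i)
        = (hA.eigenvalues i * hA.eigenvalues i) • ⇑(hA.eigenvectorBasis i) := by
      rw [← mulVec_mulVec, h1, mulVec_smul, h1, smul_smul]
    rw [hsq, smul_mulVec, h1, smul_smul] at h2
    have hne : hA.eigenvectorBasis i ≠ 0 := hA.eigenvectorBasis.orthonormal.ne_zero i
    obtain ⟨j, hj⟩ : ∃ j, hA.eigenvectorBasis i j ≠ 0 := by
      by_contra! hc
      exact hne (by ext j; simpa using hc j)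
    have h3 := congrFun h2 j
    simp only [Pi.smul_apply, smul_eq_mul] at h3
    have h4 := mul_right_cancel₀ hj h3
    have : hA.eigenvalues i * (hA.eigenvalues i + 1 / 2) = 0 := by linarith
    rcases mul_eq_zero.1 this with h | h
    · exact Or.inl h
    · exact Or.inr (by linarith)
  have hsum : ∑ i, hA.eigenvalues i = -(1 / 2) := by
    rw [← htr, hA.trace_eq_sum_eigenvalues]; simp
  set σ := Tuple.sort hA.eigenvalues with hσ
  have hmono : Monotone (hA.eigenvalues ∘ σ) := Tuple.monotone_sort _
  rw [← Equiv.sum_comp σ] at hsum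
  have l1 : lam A (n - 1) = hA.eigenvalues (σ ⟨1, by omega⟩) := by
    have hlt : n - 1 - 1 < n := by omega
    have hr : Fin.rev (⟨n - 1 - 1, hlt⟩ : Fin n) = ⟨1, by omega⟩ := by
      ext; simp [Fin.val_rev]; omega
    rw [lam, dif_pos hlt, dif_pos hA, hr]
  have l0 : lam A n = hA.eigenvalues (σ ⟨0, by omega⟩) := by
    have hlt : n - 1 < n := by omega
    have hr : Fin.rev (⟨n - 1, hlt⟩ : Fin n) = ⟨0, by omega⟩ := by
      ext; simp [Fin.val_rev]; omega
    rw [lam, dif_pos hlt, dif_pos hA, hr]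
  rw [l1, l0]
  have f0 : hA.eigenvalues (σ ⟨0, by omega⟩) = -(1 / 2) := by
    rcases hev (σ ⟨0, by omega⟩) with h | h
    · exfalso
      have : 0 ≤ ∑ i, hA.eigenvalues (σ i) := Finset.sum_nonneg fun i _ => by
        have := hmono (show (⟨0, by omega⟩ : Fin n) ≤ i from Nat.zero_le _)
        simp only [Function.comp] at this
        linarith
      linarith
    · exact h
  have f1 : hA.eigenvalues (σ ⟨1, by omega⟩) = 0 := by
    rcases hev (σ ⟨1, by omega⟩) with h | h
    · exact h
    · exfalso
      have h01 : (⟨0, by omega⟩ : Fin n) ≠ ⟨1, by omega⟩ := by simp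
      have : ∑ i ∈ {(⟨0, by omega⟩ : Fin n), ⟨1, by omega⟩}, -hA.eigenvalues (σ i)
          ≤ ∑ i, -hA.eigenvalues (σ i) :=
        Finset.sum_le_sum_of_subset_of_nonneg (Finset.subset_univ _) fun i _ _ => by
          rcases hev (σ i) with h | h <;> rw [h] <;> norm_num
      rw [Finset.sum_pair h01, Finset.sum_neg_distrib, hsum, f0, h] at this
      norm_num at this
  rw [f0, f1]; norm_num

theorem stmt_3 {n k : ℕ} (hn : 4 ≤ n) (hk : 1 ≤ k) (hkn : 4 * k ≤ n)
    (z zp : Fin n → ℝ)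
    (hz : ∀ i : Fin n, z i = if (i : ℕ) < k then 1 / Real.sqrt (k : ℝ) else 0)
    (hzp : ∀ i : Fin n, zp i = if (i : ℕ) < k then 0 else 1 / Real.sqrt ((n : ℝ) - (k : ℝ)))
    (g : Mat n → ℝ)
    (hgdef : ∀ X : Mat n, g X = -(mip (vecMulVec z z + vecMulVec zp zp) X)
        + (1 / (2 * (k : ℝ))) * ∑ i, ∑ j, |X i j|)
    : vecMulVec z z ∈ Spectra n ∧ (vecMulVec z z).rank = 1 ∧
    (∀ X ∈ Spectra n, g (vecMulVec z z) ≤ g X) ∧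
    ((-(1 / 2) : ℝ) • vecMulVec z z) ∈ subdiff g (vecMulVec z z) ∧
    (∀ X ∈ Spectra n, mip (X - vecMulVec z z) ((-(1 / 2) : ℝ) • vecMulVec z z) ≥ 0) ∧
    lam ((-(1 / 2) : ℝ) • vecMulVec z z) (n - 1)
      - lam ((-(1 / 2) : ℝ) • vecMulVec z z) n = 1 / 2 := by
  have hk0 : (0 : ℝ) < k := by exact_mod_cast hk
  have hnk : 4 * (k : ℝ) ≤ n := by exact_mod_cast hkn
  have hzz : ∀ i j, z i * z j = if (i : ℕ) < k ∧ (j : ℕ) < k then 1 / (k : ℝ) else 0 := by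
    intro i j
    rw [hz, hz]
    have := Real.mul_self_sqrt hk0.le
    by_cases h1 : (i : ℕ) < k <;> by_cases h2 : (j : ℕ) < k <;> simp [h1, h2]
    rw [← mul_inv, this]
  have hpp : ∀ i j, zp i * zp j
      = if (i : ℕ) < k ∨ (j : ℕ) < k then 0 else 1 / ((n : ℝ) - k) := by
    intro i j
    rw [hzp, hzp]
    have := Real.mul_self_sqrt (show (0 : ℝ) ≤ n - k by linarith)
    by_cases h1 : (i : ℕ) < k <;> by_cases h2 : (j : ℕ) < k <;> simp [h1, h2]
    rw [← mul_inv, this]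
  have hcard : ((Finset.univ.filter fun i : Fin n => (i : ℕ) < k).card : ℝ) = k := by
    rw [Fin.card_filter_val_lt, min_eq_right (by omega)]
  have hz1 : ∑ i, z i * z i = 1 := by
    simp only [hzz, and_self, Finset.sum_ite, Finset.sum_const, Finset.sum_const_zero,
      nsmul_eq_mul, hcard]
    field_simp
    simp
  have hdot : z ⬝ᵥ z = 1 := hz1
  have hz0 : ∀ i, 0 ≤ z i := fun i => by rw [hz]; split_ifs <;> positivity
  have hzsum : (∑ i, z i) * (∑ i, z i) = k := by
    have h : ∑ i, z i = k * (1 / Real.sqrt k) := by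
      simp only [hz, Finset.sum_ite, Finset.sum_const, Finset.sum_const_zero,
        nsmul_eq_mul, hcard, mul_zero, add_zero]
    have := Real.mul_self_sqrt hk0.le
    have hs : 0 < Real.sqrt k := Real.sqrt_pos.2 hk0
    rw [h]
    field_simp
    nlinarith
  have hzpz : ∀ i j, zp i * zp j * (z j * z i) = 0 := by
    intro i j
    rw [hpp, hzz]
    by_cases h1 : (i : ℕ) < k <;> simp [h1]
  have hmzz : mip (vecMulVec z z) (vecMulVec z z) = 1 := by
    rw [mip, vecMulVec_mul_vecMulVec, hdot, one_smul, trace_vecMulVec, hdot]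
  have hgz : g (vecMulVec z z) = -(1 / 2) := by
    have h1 : mip (vecMulVec zp zp) (vecMulVec z z) = 0 := by
      rw [aux_mip]
      simp only [vecMulVec_apply, hzpz, Finset.sum_const_zero]
    have h2 : ∑ i, ∑ j, |vecMulVec z z i j| = k := by
      simp only [vecMulVec_apply, abs_of_nonneg (mul_nonneg (hz0 _) (hz0 _))]
      rw [← hzsum, Finset.sum_mul_sum]
    have h3 : mip (vecMulVec z z + vecMulVec zp zp) (vecMulVec z z) = 1 := by
      rw [mip, add_mul, trace_add]
      change mip _ _ + mip _ _ = _
      rw [hmzz, h1, add_zero]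
    rw [hgdef, h2, h3]
    field_simp
    norm_num
  have hsub : ∀ Y : Mat n, g Y ≥ -(1 / 2) * mip (vecMulVec z z) Y := by
    intro Y
    have h3 : mip (vecMulVec z z + vecMulVec zp zp) Y
        = mip (vecMulVec z z) Y + mip (vecMulVec zp zp) Y := by
      simp only [mip, add_mul, trace_add]
    have h4 : 1 / 2 * mip (vecMulVec z z) Y + mip (vecMulVec zp zp) Y
        ≤ (1 / (2 * (k : ℝ))) * ∑ i, ∑ j, |Y i j| := by
      rw [aux_mip, aux_mip, Finset.sum_comm (f := fun i j => |Y i j|)]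
      simp only [Finset.mul_sum, ← Finset.sum_add_distrib]
      refine Finset.sum_le_sum fun i _ => Finset.sum_le_sum fun j _ => ?_
      rw [hzz, hpp]
      have ha := le_abs_self (Y j i)
      have hb := abs_nonneg (Y j i)
      have hpos : 0 < 1 / (2 * (k : ℝ)) := by positivity
      by_cases h1 : (i : ℕ) < k <;> by_cases h2 : (j : ℕ) < k <;>
        simp only [h1, h2, and_self, or_self, and_true, and_false, or_true, or_false, if_true,
          if_false, zero_mul, mul_zero, add_zero, zero_add, false_and, true_or]
      · rw [← mul_assoc]
        have : (1 : ℝ) / 2 * (1 / k) = 1 / (2 * k) := by field_simp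
        rw [this]
        exact mul_le_mul_of_nonneg_left ha hpos.le
      · positivity
      · positivity
      · have hq : 1 / ((n : ℝ) - k) ≤ 1 / (2 * (k : ℝ)) :=
          one_div_le_one_div_of_le (by positivity) (by linarith)
        have hq0 : 0 ≤ 1 / ((n : ℝ) - k) := one_div_nonneg.2 (by linarith)
        calc _ ≤ 1 / ((n : ℝ) - k) * |Y j i| := mul_le_mul_of_nonneg_left ha hq0
          _ ≤ _ := mul_le_mul_of_nonneg_right hq hb
    rw [hgdef, h3]
    linarith
  have hle : ∀ X ∈ Spectra n, mip (vecMulVec z z) X ≤ 1 := by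
    rintro X ⟨ht, hp⟩
    rw [aux_mip]
    have := aux_psd X hp z
    rwa [hz1, ht, one_mul] at this
  have hsymm : (vecMulVec z z).IsSymm := by
    ext i j; simp [vecMulVec_apply, mul_comm]
  refine ⟨⟨by rw [trace_vecMulVec, hdot], by
    simpa using posSemidef_vecMulVec_self_star z⟩, ?_, ?_, ?_, ?_, ?_⟩
  · refine le_antisymm (rank_vecMulVec_le z z) ?_
    rw [Nat.one_le_iff_ne_zero]
    intro h0
    rw [Matrix.rank, Submodule.finrank_eq_zero, LinearMap.range_eq_bot] at h0
    have h1 := congrArg (fun f => f z) h0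
    simp only [mulVecLin_apply, vecMulVec_mulVec, hdot, LinearMap.zero_apply] at h1
    simp at h1
    rw [h1] at hdot
    simp at hdot
  · intro X hX
    have h1 := hle X hX
    have h2 := hsub X
    rw [hgz]
    linarith
  · refine ⟨hsymm.smul _, fun Y _ => ?_⟩
    have h1 : mip ((-(1 / 2) : ℝ) • vecMulVec z z) (Y - vecMulVec z z)
        = -(1 / 2) * (mip (vecMulVec z z) Y - mip (vecMulVec z z) (vecMulVec z z)) := by
      simp only [mip, smul_mul_assoc, mul_sub, trace_smul, trace_sub, smul_eq_mul]
    have h2 := hsub Y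
    rw [h1, hmzz, hgz]
    linarith
  · intro X hX
    have h1 : mip (X - vecMulVec z z) ((-(1 / 2) : ℝ) • vecMulVec z z)
        = -(1 / 2) * (mip (vecMulVec z z) X - mip (vecMulVec z z) (vecMulVec z z)) := by
      simp only [mip]
      rw [trace_mul_comm]
      simp only [smul_mul_assoc, mul_sub, trace_smul, trace_sub, smul_eq_mul]
    have h2 := hle X hX
    rw [h1, hmzz]
    linarith
  · refine aux_lam_s3 hn _ ?_ ?_ ?_
    · ext i j
      simp [conjTranspose_apply, vecMulVec_apply, mul_comm]
    · rw [smul_mul_smul_comm, vecMulVec_mul_vecMulVec, hdot, one_smul, smul_smul]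
    · rw [trace_smul, trace_vecMulVec, hdot]; simp
end
end

section
/- Consider the sparse-PCA objective g(X) = −⟨ zz^⊤ + z⊥z⊥^⊤, X ⟩ + (1/(2k))‖X‖₁ with 1 ≤ k ≤ n/4. Let 0 < η < 2/3 and let v ∈ ℝⁿ be any unit vector (‖v‖₂ = 1) supported on the first k coordinates (v_i = 0 for i > k) with ‖vv^⊤ − zz^⊤‖_F² ≤ 1/k². Then G = −zz^⊤ − z⊥z⊥^⊤ + (1/(2k))·sign(vv^⊤) is a subgradient of g at vv^⊤ (G ∈ ∂g(vv^⊤)), and the projected subgradient step from vv^⊤ increases the rank: rank( Π_{S_n}[ vv^⊤ − η G ] ) ≥ 2. -/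
open scoped BigOperators RealInnerProductSpace
open Matrix

noncomputable section

/-- Entrywise inner product. -/
def entIp {n : ℕ} (A B : Mat n) : ℝ := ∑ i, ∑ j, A i j * B i j

lemma entIp_vecMulVec {n : ℕ} (a b c d : Fin n → ℝ) :
    entIp (vecMulVec a b) (vecMulVec c d) = (a ⬝ᵥ c) * (b ⬝ᵥ d) := by
  simp only [entIp, vecMulVec_apply, dotProduct]
  rw [Finset.sum_mul_sum]
  exact Finset.sum_congr rfl fun i _ => Finset.sum_congr rfl fun j _ => by ring

lemma entIp_add_left {n : ℕ} (A B C : Mat n) : entIp (A + B) C = entIp A C + entIp B C := by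
  simp [entIp, add_mul, Finset.sum_add_distrib]

lemma entIp_sub_left {n : ℕ} (A B C : Mat n) : entIp (A - B) C = entIp A C - entIp B C := by
  simp [entIp, sub_mul, Finset.sum_sub_distrib]

lemma entIp_sub_right {n : ℕ} (A B C : Mat n) : entIp A (B - C) = entIp A B - entIp A C := by
  simp [entIp, mul_sub, Finset.sum_sub_distrib]

lemma entIp_smul_left {n : ℕ} (c : ℝ) (A B : Mat n) : entIp (c • A) B = c * entIp A B := by
  simp [entIp, Finset.mul_sum, mul_assoc]

lemma frob_sq {n : ℕ} (A : Mat n) : frob A ^ 2 = entIp A A := by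
  unfold frob entIp
  have h : 0 ≤ ∑ i, ∑ j, (A i j) ^ 2 :=
    Finset.sum_nonneg fun i _ => Finset.sum_nonneg fun j _ => sq_nonneg _
  rw [Real.sq_sqrt h]
  simp [sq]

lemma entIp_self_nonneg {n : ℕ} (A : Mat n) : 0 ≤ entIp A A := by
  rw [← frob_sq]; positivity

lemma mip_eq_entIp {n : ℕ} (A B : Mat n) (hB : B.IsSymm) : mip A B = entIp A B := by
  simp only [mip, entIp, trace, diag, mul_apply]
  refine Finset.sum_congr rfl fun i _ => Finset.sum_congr rfl fun j _ => ?_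
  rw [hB.apply]

lemma spectra_entry {n : ℕ} (P : Mat n) (hP : P ∈ Spectra n) (i j : Fin n) :
    P i j ∈ Set.Icc (-1 : ℝ) 1 := by
  obtain ⟨ht, hp⟩ := hP
  have hd : ∀ i, 0 ≤ P i i := fun i => hp.diag_nonneg
  have hd1 : ∀ i, P i i ≤ 1 := fun i => by
    rw [← ht]
    exact Finset.single_le_sum (f := fun i => P i i) (fun i _ => hd i) (Finset.mem_univ i)
  have hs : P j i = P i j := by simpa using hp.1.apply i j
  have h1 := hp.dotProduct_mulVec_nonneg (Pi.single i 1 + Pi.single j 1)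
  have h2 := hp.dotProduct_mulVec_nonneg (Pi.single i 1 - Pi.single j 1)
  simp [mulVec_add, mulVec_sub, add_dotProduct, sub_dotProduct, dotProduct_add, dotProduct_sub, hs]
    at h1 h2
  constructor <;> linarith [hd1 i, hd1 j]

lemma spectra_compact (n : ℕ) : IsCompact (Spectra n) := by
  have hbox : IsCompact (Set.pi Set.univ fun _ : Fin n => Set.pi Set.univ
      fun _ : Fin n => Set.Icc (-1 : ℝ) 1) :=
    isCompact_univ_pi fun _ => isCompact_univ_pi fun _ => isCompact_Icc
  refine IsCompact.of_isClosed_subset (X := Fin n → Fin n → ℝ) hbox ?_ ?_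
  · have : Spectra n = {X : Mat n | X.trace = 1} ∩ ({X : Mat n | Xᵀ = X} ∩
        ⋂ x : Fin n → ℝ, {X : Mat n | 0 ≤ x ⬝ᵥ (X *ᵥ x)}) := by
      ext X
      simp only [Spectra, Set.mem_ofPred_eq, Set.mem_inter_iff, Set.mem_iInter,
        posSemidef_iff_dotProduct_mulVec, IsHermitian, conjTranspose_eq_transpose_of_trivial,
        star_trivial]
    have h : IsClosed (Spectra n) := by
      rw [this]
      refine IsClosed.inter (isClosed_eq (by fun_prop) (by fun_prop))
        (IsClosed.inter (isClosed_eq (by fun_prop) (by fun_prop)) (isClosed_iInter fun x => ?_))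
      exact isClosed_le (by fun_prop) (by fun_prop)
    exact h
  · intro P hP i _ j _
    exact spectra_entry P hP i j

lemma unit_mem_spectra {n : ℕ} (w : Fin n → ℝ) (hw : w ⬝ᵥ w = 1) :
    vecMulVec w w ∈ Spectra n :=
  ⟨by rw [trace_vecMulVec]; exact hw, by simpa using posSemidef_vecMulVec_self_star w⟩

lemma mproj_spec {n : ℕ} (hne : (Spectra n).Nonempty) (X : Mat n) :
    mproj (Spectra n) X ∈ Spectra n ∧
      ∀ Q ∈ Spectra n, frob (X - mproj (Spectra n) X) ≤ frob (X - Q) := by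
  have hc : Continuous fun P : Mat n => frob (X - P) := by
    unfold frob
    refine Real.continuous_sqrt.comp ?_
    refine continuous_finsetSum _ fun i _ => continuous_finsetSum _ fun j _ => ?_
    simp only [Matrix.sub_apply]
    have : Continuous fun P : Mat n => P i j := continuous_id.matrix_elem i j
    fun_prop
  obtain ⟨P, hP, hm⟩ := (spectra_compact n).exists_isMinOn hne hc.continuousOn
  have : ∃ P, P ∈ Spectra n ∧ ∀ Q ∈ Spectra n, frob (X - P) ≤ frob (X - Q) :=
    ⟨P, hP, fun Q hQ => hm hQ⟩
  exact Classical.epsilon_spec this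

lemma mproj_opt {n : ℕ} (M P R : Mat n) (hP : P ∈ Spectra n) (hR : R ∈ Spectra n)
    (hm : ∀ Q ∈ Spectra n, frob (M - P) ≤ frob (M - Q)) :
    entIp (M - P) R ≤ entIp (M - P) P := by
  have key : ∀ s : ℝ, 0 < s → s ≤ 1 →
      2 * entIp (M - P) (R - P) ≤ s * entIp (R - P) (R - P) := by
    intro s hs0 hs1
    have hQ : (1 - s) • P + s • R ∈ Spectra n := by
      refine ⟨?_, (hP.2.smul (by linarith : (0:ℝ) ≤ 1 - s)).add (hR.2.smul hs0.le)⟩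
      rw [trace_add, trace_smul, trace_smul, hP.1, hR.1]; simp
    have h := hm _ hQ
    have h2 : frob (M - P) ^ 2 ≤ frob (M - ((1 - s) • P + s • R)) ^ 2 :=
      pow_le_pow_left₀ (Real.sqrt_nonneg _) h 2
    rw [frob_sq, frob_sq] at h2
    have e : entIp (M - ((1 - s) • P + s • R)) (M - ((1 - s) • P + s • R))
        = entIp (M - P) (M - P) - 2 * s * entIp (M - P) (R - P)
          + s ^ 2 * entIp (R - P) (R - P) := by
      simp only [entIp, Finset.mul_sum, ← Finset.sum_sub_distrib, ← Finset.sum_add_distrib]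
      refine Finset.sum_congr rfl fun i _ => Finset.sum_congr rfl fun j _ => ?_
      simp only [Matrix.sub_apply, Matrix.add_apply, Matrix.smul_apply, smul_eq_mul]
      ring
    rw [e] at h2
    have : 0 ≤ s * (s * entIp (R - P) (R - P) - 2 * entIp (M - P) (R - P)) := by nlinarith
    have := nonneg_of_mul_nonneg_right this hs0
    linarith
  have hD := entIp_self_nonneg (R - P)
  have : entIp (M - P) (R - P) ≤ 0 := by
    by_contra hcon
    push Not at hcon
    set a := entIp (M - P) (R - P)
    set d := entIp (R - P) (R - P)
    have h := key (min 1 (a / (d + 1))) (by positivity) (min_le_left _ _)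
    have h3 : min 1 (a / (d + 1)) * d ≤ a / (d + 1) * d :=
      mul_le_mul_of_nonneg_right (min_le_right _ _) hD
    have h4 : a / (d + 1) * d ≤ a := by
      rw [div_mul_eq_mul_div, div_le_iff₀ (by positivity)]
      nlinarith
    linarith
  rw [entIp_sub_right] at this
  linarith

lemma rank_one_form {n : ℕ} (P : Mat n) (hP : P ∈ Spectra n) (hr : P.rank ≤ 1) :
    ∃ u : Fin n → ℝ, u ⬝ᵥ u = 1 ∧ P = vecMulVec u u := by
  unfold Matrix.rank at hr
  obtain ⟨a, ha⟩ := (finrank_le_one_iff).1 hr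
  have hc : ∀ j, ∃ c : ℝ, ∀ i, P i j = a.1 i * c := by
    intro j
    obtain ⟨c, hc⟩ := ha ⟨P.mulVecLin (Pi.single j 1), LinearMap.mem_range_self _ _⟩
    refine ⟨c, fun i => ?_⟩
    have := congrFun (congrArg Subtype.val hc) i
    simp at this
    rw [← this, mul_comm]
  choose c hc using hc
  set b : Fin n → ℝ := a.1
  have hs : ∀ i j, b i * c j = b j * c i := by
    intro i j
    rw [← hc, ← hc]
    simpa using (hP.2.1.apply i j).symm
  have ht : ∑ i, b i * c i = 1 := by
    rw [← hP.1]
    simp [trace, hc]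
  set N := ∑ i, b i * b i with hN
  have hcN : ∀ j, c j * N = b j := by
    intro j
    calc c j * N = ∑ i, b i * (b i * c j) := by
          rw [hN, Finset.mul_sum]; exact Finset.sum_congr rfl fun i _ => by ring
      _ = ∑ i, b j * (b i * c i) := Finset.sum_congr rfl fun i _ => by rw [hs i j]; ring
      _ = b j := by rw [← Finset.mul_sum, ht, mul_one]
  have hN0 : 0 ≤ N := Finset.sum_nonneg fun i _ => mul_self_nonneg _
  have hNpos : 0 < N := by
    rcases hN0.lt_or_eq with h | h
    · exact h
    · have : ∀ j, b j = 0 := fun j => by rw [← hcN j, ← h, mul_zero]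
      simp [this] at ht
  have hsq : Real.sqrt N * Real.sqrt N = N := Real.mul_self_sqrt hN0
  have hsp : 0 < Real.sqrt N := Real.sqrt_pos.2 hNpos
  refine ⟨fun i => b i / Real.sqrt N, ?_, ?_⟩
  · simp only [dotProduct, div_mul_div_comm, hsq, ← Finset.sum_div]
    exact div_self hNpos.ne'
  · ext i j
    rw [hc, vecMulVec_apply, div_mul_div_comm, hsq, ← hcN j]
    field_simp

lemma bessel {n : ℕ} (u v w : Fin n → ℝ) (hu : u ⬝ᵥ u = 1) (hv : v ⬝ᵥ v = 1)
    (hw : w ⬝ᵥ w = 1) (hvw : v ⬝ᵥ w = 0) : (u ⬝ᵥ v) ^ 2 + (u ⬝ᵥ w) ^ 2 ≤ 1 := by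
  set x := u - (u ⬝ᵥ v) • v - (u ⬝ᵥ w) • w with hx
  have h : 0 ≤ x ⬝ᵥ x := Finset.sum_nonneg fun i _ => mul_self_nonneg _
  have e : x ⬝ᵥ x = 1 - (u ⬝ᵥ v) ^ 2 - (u ⬝ᵥ w) ^ 2 := by
    rw [hx]
    simp only [sub_dotProduct, dotProduct_sub, smul_dotProduct, dotProduct_smul, hu, hv, hw, hvw,
      dotProduct_comm w v, dotProduct_comm v u, dotProduct_comm w u, smul_eq_mul]
    ring
  linarith

lemma rank_step {n : ℕ} (z zp v : Fin n → ℝ) (η : ℝ) (hη0 : 0 < η) (hη : η < 2 / 3)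
    (hv : v ⬝ᵥ v = 1) (hz : z ⬝ᵥ z = 1) (hzp : zp ⬝ᵥ zp = 1)
    (hvzp : v ⬝ᵥ zp = 0) (hzzp : z ⬝ᵥ zp = 0) (M : Mat n)
    (hM : M = vecMulVec v v + (η / 2) • vecMulVec z z + η • vecMulVec zp zp) :
    2 ≤ (mproj (Spectra n) M).rank := by
  obtain ⟨hP, hm⟩ := mproj_spec ⟨_, unit_mem_spectra v hv⟩ M
  set P := mproj (Spectra n) M
  by_contra hcon
  obtain ⟨u, hu, hPu⟩ := rank_one_form P hP (by omega)
  have hf : ∀ w : Fin n → ℝ, entIp (M - P) (vecMulVec w w) =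
      (v ⬝ᵥ w) ^ 2 + η / 2 * (z ⬝ᵥ w) ^ 2 + η * (zp ⬝ᵥ w) ^ 2 - (u ⬝ᵥ w) ^ 2 := by
    intro w
    rw [hPu, hM]
    simp only [entIp_sub_left, entIp_add_left, entIp_smul_left, entIp_vecMulVec]
    ring
  have h1 := mproj_opt M P _ hP (unit_mem_spectra zp hzp) hm
  have h2 := mproj_opt M P _ hP (unit_mem_spectra v hv) hm
  have hfu : entIp (M - P) P = _ := (congrArg (entIp (M - P)) hPu).trans (hf u)
  rw [hf, hfu] at h1 h2
  have b1 := bessel u v zp hu hv hzp hvzp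
  have b2 := bessel u z zp hu hz hzp hzzp
  simp only [hv, hzp, hvzp, hzzp, dotProduct_comm zp v, hu, dotProduct_comm v u,
    dotProduct_comm z u, dotProduct_comm zp u] at h1 h2
  have hb := mul_le_mul_of_nonneg_left b2 hη0.le
  have ht : 1 ≤ (u ⬝ᵥ zp) ^ 2 := by
    have : 0 ≤ η * ((u ⬝ᵥ zp) ^ 2 - 1) := by nlinarith
    have := nonneg_of_mul_nonneg_right this hη0
    linarith
  nlinarith [sq_nonneg (u ⬝ᵥ v), sq_nonneg (u ⬝ᵥ z), mul_nonneg hη0.le (sq_nonneg (z ⬝ᵥ v))]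

lemma abs_ge_sign (x y : ℝ) : |x| + Real.sign x * (y - x) ≤ |y| := by
  rcases lt_trichotomy x 0 with h | h | h
  · rw [Real.sign_of_neg h, abs_of_neg h]; linarith [neg_abs_le y]
  · simp [h]
  · rw [Real.sign_of_pos h, abs_of_pos h]; linarith [le_abs_self y]

lemma sign_block {n k : ℕ} (hk : 1 ≤ k) (hkn : 4 * k ≤ n) (z v : Fin n → ℝ)
    (hz : ∀ i : Fin n, z i = if (i : ℕ) < k then 1 / Real.sqrt (k : ℝ) else 0)
    (hv : v ⬝ᵥ v = 1)
    (hsupp : ∀ i : Fin n, k ≤ (i : ℕ) → v i = 0)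
    (hclose : frob (vecMulVec v v - vecMulVec z z) ^ 2 ≤ 1 / (k : ℝ) ^ 2) :
    Matrix.of (fun i j => Real.sign (vecMulVec v v i j)) = (k : ℝ) • vecMulVec z z := by
  have hk0 : (0 : ℝ) < k := by exact_mod_cast hk
  have hsq : Real.sqrt (k : ℝ) * Real.sqrt k = k := Real.mul_self_sqrt hk0.le
  have hzz : ∀ i j : Fin n, (i : ℕ) < k → (j : ℕ) < k → z i * z j = 1 / k := by
    intro i j hi hj
    rw [hz, hz, if_pos hi, if_pos hj, div_mul_div_comm, hsq, one_mul]
  rw [frob_sq] at hclose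
  have hrow : ∀ i j : Fin n, i ≠ j → (v i * v j - z i * z j) ^ 2 + (v j * v i - z j * z i) ^ 2
      ≤ 1 / (k : ℝ) ^ 2 := by
    intro i j hij
    refine le_trans ?_ hclose
    unfold entIp
    have hnn : ∀ a : Fin n, 0 ≤ ∑ b, (vecMulVec v v - vecMulVec z z) a b *
        (vecMulVec v v - vecMulVec z z) a b :=
      fun a => Finset.sum_nonneg fun b _ => mul_self_nonneg _
    have hent : ∀ a b : Fin n, (v a * v b - z a * z b) ^ 2 ≤
        ∑ b, (vecMulVec v v - vecMulVec z z) a b * (vecMulVec v v - vecMulVec z z) a b := by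
      intro a b
      have := Finset.single_le_sum (f := fun b => (vecMulVec v v - vecMulVec z z) a b *
        (vecMulVec v v - vecMulVec z z) a b) (fun b _ => mul_self_nonneg _) (Finset.mem_univ b)
      refine le_trans (le_of_eq ?_) this
      simp [vecMulVec_apply, sq]
    calc _ ≤ _ := add_le_add (hent i j) (hent j i)
      _ = ∑ a ∈ ({i, j} : Finset (Fin n)), ∑ b, (vecMulVec v v - vecMulVec z z) a b *
          (vecMulVec v v - vecMulVec z z) a b :=
        (Finset.sum_pair (f := fun a => ∑ b, (vecMulVec v v - vecMulVec z z) a b *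
          (vecMulVec v v - vecMulVec z z) a b) hij).symm
      _ ≤ _ := Finset.sum_le_sum_of_subset_of_nonneg (Finset.subset_univ _) fun a _ _ => hnn a
  have hpos : ∀ i j : Fin n, i ≠ j → (i : ℕ) < k → (j : ℕ) < k → 0 < v i * v j := by
    intro i j hij hi hj
    have h := hrow i j hij
    rw [hzz i j hi hj, hzz j i hj hi] at h
    by_contra hc
    push Not at hc
    have hik : 0 < 1 / (k : ℝ) := by positivity
    have e : 1 / (k : ℝ) ^ 2 = (1 / k) ^ 2 := by rw [div_pow, one_pow]
    rw [e] at h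
    nlinarith [mul_comm (v i) (v j), mul_nonneg hik.le (neg_nonneg.2 hc)]
  have hdiag : ∀ i : Fin n, (i : ℕ) < k → v i ≠ 0 := by
    intro i hi h0
    by_cases hall : ∃ j : Fin n, i ≠ j ∧ (j : ℕ) < k
    · obtain ⟨j, hij, hj⟩ := hall
      have := hpos i j hij hi hj
      simp [h0] at this
    · push Not at hall
      have : v = 0 := by
        funext j
        by_cases hij : i = j
        · rw [← hij, h0]; rfl
        · exact hsupp j (hall j hij)
      simp [this] at hv
  ext i j
  simp only [of_apply, Matrix.smul_apply, vecMulVec_apply, smul_eq_mul]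
  by_cases hi : (i : ℕ) < k
  · by_cases hj : (j : ℕ) < k
    · rw [hzz i j hi hj]
      have : 0 < v i * v j := by
        by_cases hij : i = j
        · rw [← hij]; exact mul_self_pos.2 (hdiag i hi)
        · exact hpos i j hij hi hj
      rw [Real.sign_of_pos this]
      field_simp
    · rw [hsupp j (by omega), hz j, if_neg hj]; simp
  · rw [hsupp i (by omega), hz i, if_neg hi]; simp

theorem stmt_4 {n k : ℕ} (hn : 4 ≤ n) (hk : 1 ≤ k) (hkn : 4 * k ≤ n)
    (z zp : Fin n → ℝ)
    (hz : ∀ i : Fin n, z i = if (i : ℕ) < k then 1 / Real.sqrt (k : ℝ) else 0)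
    (hzp : ∀ i : Fin n, zp i = if (i : ℕ) < k then 0 else 1 / Real.sqrt ((n : ℝ) - (k : ℝ)))
    (g : Mat n → ℝ)
    (hgdef : ∀ X : Mat n, g X = -(mip (vecMulVec z z + vecMulVec zp zp) X)
        + (1 / (2 * (k : ℝ))) * ∑ i, ∑ j, |X i j|)
    (η : ℝ) (hη0 : 0 < η) (hη : η < 2 / 3)
    (v : Fin n → ℝ) (hvnorm : Real.sqrt (∑ i, (v i) ^ 2) = 1)
    (hsupp : ∀ i : Fin n, k ≤ (i : ℕ) → v i = 0)
    (hclose : frob (vecMulVec v v - vecMulVec z z) ^ 2 ≤ 1 / (k : ℝ) ^ 2)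
    (G : Mat n)
    (hGdef : G = -(vecMulVec z z) - vecMulVec zp zp
        + (1 / (2 * (k : ℝ))) • Matrix.of (fun i j => Real.sign (vecMulVec v v i j))) :
    G ∈ subdiff g (vecMulVec v v) ∧
    2 ≤ (mproj (Spectra n) (vecMulVec v v - η • G)).rank := by
  have hk0 : (0 : ℝ) < k := by exact_mod_cast hk
  have hv : v ⬝ᵥ v = 1 := by
    have h := Real.sqrt_eq_one.1 hvnorm
    simpa [dotProduct, sq] using h
  have hsymm : ∀ w : Fin n → ℝ, (vecMulVec w w).IsSymm := fun w => by
    ext i j; simp [vecMulVec_apply, mul_comm]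
  have hsign := sign_block hk hkn z v hz hv hsupp hclose
  have hGs : G.IsSymm := by
    rw [hGdef, hsign]
    ext i j; simp [vecMulVec_apply, mul_comm]
  constructor
  · refine ⟨hGs, fun Y hY => ?_⟩
    have hY' : Y.IsSymm := hY
    set X := vecMulVec v v with hX
    have hXs : X.IsSymm := hsymm v
    rw [hgdef, hgdef, mip_eq_entIp _ _ hY', mip_eq_entIp _ _ hXs,
      mip_eq_entIp _ _ (hY'.sub hXs)]
    have h : (∑ i, ∑ j, |X i j|) + entIp (Matrix.of (fun i j => Real.sign (X i j))) (Y - X)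
        ≤ ∑ i, ∑ j, |Y i j| := by
      simp only [entIp, ← Finset.sum_add_distrib]
      exact Finset.sum_le_sum fun i _ => Finset.sum_le_sum fun j _ => abs_ge_sign _ _
    have h' := mul_le_mul_of_nonneg_left h (by positivity : 0 ≤ 1 / (2 * (k : ℝ)))
    have eG : G = (1 / (2 * (k : ℝ))) • Matrix.of (fun i j => Real.sign (X i j))
        - (vecMulVec z z + vecMulVec zp zp) := by rw [hGdef]; abel
    rw [eG, entIp_sub_left, entIp_smul_left, entIp_sub_right (vecMulVec z z + vecMulVec zp zp)]
    linarith
  · have hkn' : (0 : ℝ) < n - k := by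
      have : (4 * k : ℝ) ≤ n := by exact_mod_cast hkn
      linarith
    have hcard : (Finset.univ.filter fun i : Fin n => (i : ℕ) < k).card = k := by
      rw [Fin.card_filter_val_lt]; omega
    have hcard2 : ((Finset.univ.filter fun i : Fin n => ¬ (i : ℕ) < k).card : ℝ) = n - k := by
      have := Finset.card_filter_add_card_filter_not (s := (Finset.univ : Finset (Fin n)))
        (fun i : Fin n => (i : ℕ) < k)
      rw [hcard, Finset.card_univ, Fintype.card_fin] at this
      have h2 : (k : ℝ) + ((Finset.univ.filter fun i : Fin n => ¬ (i : ℕ) < k).card : ℝ) = n := by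
        exact_mod_cast this
      linarith
    have hzz : z ⬝ᵥ z = 1 := by
      have : ∀ i, z i * z i = if (i : ℕ) < k then 1 / (k : ℝ) else 0 := fun i => by
        rw [hz]; split_ifs
        · rw [div_mul_div_comm, Real.mul_self_sqrt hk0.le, one_mul]
        · simp
      simp only [dotProduct, this]
      rw [← Finset.sum_filter, Finset.sum_const, hcard, nsmul_eq_mul]
      field_simp
    have hzpzp : zp ⬝ᵥ zp = 1 := by
      have : ∀ i, zp i * zp i = if ¬ (i : ℕ) < k then 1 / ((n : ℝ) - k) else 0 := fun i => by
        rw [hzp]; split_ifs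
        · simp
        · rw [div_mul_div_comm, Real.mul_self_sqrt hkn'.le, one_mul]
      simp only [dotProduct, this]
      rw [← Finset.sum_filter, Finset.sum_const, nsmul_eq_mul, hcard2]
      field_simp
    have hvzp : v ⬝ᵥ zp = 0 := Finset.sum_eq_zero fun i _ => by
      by_cases hi : (i : ℕ) < k
      · rw [hzp, if_pos hi, mul_zero]
      · rw [hsupp i (by omega), zero_mul]
    have hzzp : z ⬝ᵥ zp = 0 := Finset.sum_eq_zero fun i _ => by
      by_cases hi : (i : ℕ) < k
      · rw [hzp, if_pos hi, mul_zero]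
      · rw [hz, if_neg hi, zero_mul]
    refine rank_step z zp v η hη0 hη hv hzz hzpzp hvzp hzzp _ ?_
    rw [hGdef, hsign]
    ext i j
    simp only [Matrix.sub_apply, Matrix.add_apply, Matrix.smul_apply, Matrix.neg_apply, smul_eq_mul]
    field_simp
    ring
end
end

section
/- Suppose g(X) = h(X) + max_{y∈K} ⟨y, 𝒜(X) − b⟩ where h : 𝕊ⁿ → ℝ is convex and differentiable, 𝒜 : 𝕊ⁿ → ℝᵐ is linear, b ∈ ℝᵐ, and K ⊆ ℝᵐ is nonempty, compact and convex; set f(X,y) = h(X) + ⟨y, 𝒜(X) − b⟩. If X* is a minimizer of g over S_n and G* ∈ ∂g(X*) satisfies ⟨X − X*, G*⟩ ≥ 0 for all X ∈ S_n, then there exists y* ∈ argmax_{y∈K} f(X*,y) such that (X*,y*) is a saddle point of min_{X∈S_n} max_{y∈K} f(X,y) and ∇_X f(X*,y*) = G* (where ∇_X f(X,y) = ∇h(X) + 𝒜^⊤(y), with 𝒜^⊤ the adjoint of 𝒜). -/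
open scoped BigOperators RealInnerProductSpace
open Matrix

noncomputable section

lemma mip_add_right' {n : ℕ} (G X Y : Mat n) : mip G (X + Y) = mip G X + mip G Y := by
  simp [mip, Matrix.mul_add]

lemma mip_sub_right' {n : ℕ} (G X Y : Mat n) : mip G (X - Y) = mip G X - mip G Y := by
  simp [mip, Matrix.mul_sub]

lemma mip_smul_right' {n : ℕ} (G X : Mat n) (c : ℝ) : mip G (c • X) = c * mip G X := by
  simp [mip]

lemma mip_sub_left' {n : ℕ} (G H X : Mat n) : mip (G - H) X = mip G X - mip H X := by
  simp [mip, Matrix.sub_mul]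

lemma mip_comm' {n : ℕ} (G X : Mat n) : mip G X = mip X G := by
  exact Matrix.trace_mul_comm G X

lemma continuous_mip' {n : ℕ} (G : Mat n) : Continuous (fun X : Mat n => mip G X) := by
  unfold mip
  fun_prop

lemma convex_SymM' (n : ℕ) : Convex ℝ (SymM n) := by
  intro X hX Y hY a b _ _ _
  have hX' : Xᵀ = X := hX
  have hY' : Yᵀ = Y := hY
  show (a • X + b • Y)ᵀ = a • X + b • Y
  simp [hX', hY']

lemma isClosed_SymM' (n : ℕ) : IsClosed (SymM n) := by
  have : SymM n = {X : Mat n | Xᵀ = X} := rfl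
  rw [this]
  exact isClosed_eq (by fun_prop) continuous_id

/-- The box of radius one around `X`. -/
def boxM {n : ℕ} (X : Mat n) : Set (Mat n) :=
  Set.pi Set.univ (fun i => Set.pi Set.univ (fun j => Set.Icc (X i j - 1) (X i j + 1)))

lemma boxM_compact {n : ℕ} (X : Mat n) : IsCompact (boxM X) :=
  isCompact_univ_pi (fun _ => isCompact_univ_pi (fun _ => isCompact_Icc))

lemma boxM_convex {n : ℕ} (X : Mat n) : Convex ℝ (boxM X) :=
  convex_pi (fun _ _ => convex_pi (fun _ _ => convex_Icc _ _))

lemma boxM_nhds {n : ℕ} (X : Mat n) : boxM X ∈ nhds X :=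
  set_pi_mem_nhds Set.finite_univ (fun i _ => set_pi_mem_nhds Set.finite_univ
    (fun j _ => Icc_mem_nhds (by linarith) (by linarith)))

theorem stmt_7 {n m : ℕ} (hn : 2 ≤ n)
    (K : Set (Vec m)) (hKne : K.Nonempty) (hKcp : IsCompact K) (hKcv : Convex ℝ K)
    (h0 : Mat n → ℝ) (hh0 : ConvexOn ℝ (SymM n) h0)
    (gh : Mat n → Mat n) (hgh : ∀ X ∈ SymM n, subdiff h0 X = {gh X})
    (A : Mat n →ₗ[ℝ] Vec m) (b : Vec m)
    (Aadj : Vec m → Mat n) (hAs : ∀ y : Vec m, (Aadj y).IsSymm)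
    (hAadj : ∀ X ∈ SymM n, ∀ y : Vec m, ⟪A X, y⟫ = mip (Aadj y) X)
    (g : Mat n → ℝ)
    (hgdef : ∀ X : Mat n, g X = h0 X + sSup ((fun y => ⟪y, A X - b⟫) '' K))
    (f : Mat n → Vec m → ℝ) (hfdef : ∀ (X : Mat n) (y : Vec m), f X y = h0 X + ⟪y, A X - b⟫)
    (Xs : Mat n) (hXsS : Xs ∈ Spectra n)
    (hmin : ∀ X ∈ Spectra n, g Xs ≤ g X)
    (G : Mat n) (hG : G ∈ subdiff g Xs)
    (hfo : ∀ X ∈ Spectra n, mip (X - Xs) G ≥ 0) :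
    ∃ ys ∈ K, (∀ y ∈ K, f Xs y ≤ f Xs ys) ∧
      (∀ X ∈ Spectra n, ∀ y ∈ K, f Xs y ≤ f Xs ys ∧ f Xs ys ≤ f X ys) ∧
      gh Xs + Aadj ys = G := by
  have hXsym : Xs ∈ SymM n := by
    have := hXsS.2.isHermitian
    show Xsᵀ = Xs
    simpa [Matrix.IsHermitian, Matrix.conjTranspose_eq_transpose_of_trivial] using this
  have hAc : Continuous A := A.continuous_of_finiteDimensional
  have hsub : ∀ X ∈ SymM n, ∀ Y ∈ SymM n, h0 Y ≥ h0 X + mip (gh X) (Y - X) := by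
    intro X hX
    have : gh X ∈ subdiff h0 X := by rw [hgh X hX]; rfl
    exact this.2
  have hlsc : LowerSemicontinuousOn h0 (SymM n) := by
    intro X hX c hc
    have hcont : Continuous (fun Y : Mat n => h0 X + mip (gh X) (Y - X)) :=
      continuous_const.add ((continuous_mip' _).comp (continuous_id.sub continuous_const))
    have hX0 : c < h0 X + mip (gh X) (X - X) := by simpa [mip] using hc
    have hev := hcont.continuousAt.eventually_const_lt hX0
    filter_upwards [nhdsWithin_le_nhds hev, self_mem_nhdsWithin] with Y hY hYs
    exact lt_of_lt_of_le hY (hsub X hX Y hYs)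
  let F : Mat n → Vec m → ℝ := fun X y => h0 X + (⟪y, A X - b⟫ - mip G X)
  have hFconv : ∀ y, ConvexOn ℝ (SymM n) (fun X => F X y) := by
    intro y
    refine hh0.add ⟨convex_SymM' n, ?_⟩
    intro X _ Y _ p q _ _ hpq
    obtain rfl : q = 1 - p := by linarith
    simp only [map_add, map_smul, inner_sub_right, inner_add_right, inner_smul_right,
      mip_add_right', mip_smul_right', smul_eq_mul]
    apply le_of_eq
    ring
  have hFlsc : ∀ y, LowerSemicontinuousOn (fun X => F X y) (SymM n) := by
    intro y
    refine hlsc.add ((Continuous.lowerSemicontinuous ?_).lowerSemicontinuousOn _)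
    exact (continuous_const.inner (hAc.sub continuous_const)).sub (continuous_mip' G)
  have hFcont : ∀ X, Continuous (fun y => F X y) := by
    intro X
    exact continuous_const.add ((continuous_id.inner continuous_const).sub continuous_const)
  have hFconc : ∀ X, ConcaveOn ℝ K (fun y => F X y) := by
    intro X
    refine ⟨hKcv, ?_⟩
    intro y _ z _ p q _ _ hpq
    obtain rfl : q = 1 - p := by linarith
    simp only [F, inner_add_left, real_inner_smul_left, smul_eq_mul]
    apply le_of_eq
    ring
  have hbdd : ∀ X, BddAbove ((fun y => ⟪y, A X - b⟫) '' K) := fun X =>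
    (hKcp.image (continuous_id.inner continuous_const)).bddAbove
  have hgle : ∀ X, ∀ y ∈ K, h0 X + ⟪y, A X - b⟫ ≤ g X := by
    intro X y hy
    rw [hgdef]
    have := le_csSup (hbdd X) (Set.mem_image_of_mem _ hy)
    linarith
  obtain ⟨a, ha, ys, hys, hsad⟩ := Sion.exists_isSaddlePointOn (X := SymM n ∩ boxM Xs) (Y := K)
    (f := F) ⟨Xs, hXsym, mem_of_mem_nhds (boxM_nhds Xs)⟩
    ((convex_SymM' n).inter (boxM_convex Xs))
    ((boxM_compact Xs).inter_left (isClosed_SymM' n))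
    (fun y _ => (hFlsc y).mono Set.inter_subset_left)
    (fun y _ => ((hFconv y).subset Set.inter_subset_left
      ((convex_SymM' n).inter (boxM_convex Xs))).quasiconvexOn)
    hKcv hKne hKcp
    (fun X _ => (hFcont X).upperSemicontinuous.upperSemicontinuousOn _)
    (fun X _ => (hFconc X).quasiconcaveOn)
  -- lower bound on the box
  have hlow : ∀ X ∈ SymM n ∩ boxM Xs, g Xs - mip G Xs ≤ F X ys := by
    intro X hX
    have h1 : g a - mip G a ≤ F X ys := by
      have : sSup ((fun y => ⟪y, A a - b⟫) '' K) ≤ F X ys + mip G a - h0 a := by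
        apply csSup_le (hKne.image _)
        rintro _ ⟨y, hy, rfl⟩
        have := hsad X hX y hy
        simp only [F] at this ⊢
        linarith
      rw [hgdef]
      linarith
    have h2 := hG.2 a ha.1
    rw [mip_sub_right'] at h2
    linarith
  have hXsbox : Xs ∈ SymM n ∩ boxM Xs := ⟨hXsym, mem_of_mem_nhds (boxM_nhds Xs)⟩
  have hval : h0 Xs + ⟪ys, A Xs - b⟫ = g Xs := by
    apply le_antisymm (hgle Xs ys hys)
    have := hlow Xs hXsbox
    simp only [F] at this
    linarith
  have hloc : IsLocalMinOn (fun X => F X ys) (SymM n) Xs := by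
    filter_upwards [nhdsWithin_le_nhds (boxM_nhds Xs), self_mem_nhdsWithin] with X hX hXs
    have := hlow X ⟨hXs, hX⟩
    simp only [F] at this ⊢
    linarith
  have hglob : ∀ X ∈ SymM n, F Xs ys ≤ F X ys :=
    IsMinOn.of_isLocalMinOn_of_convexOn hXsym hloc (hFconv ys)
  have hmax : ∀ y ∈ K, f Xs y ≤ f Xs ys := by
    intro y hy
    rw [hfdef, hfdef, hval]
    exact hgle Xs y hy
  refine ⟨ys, hys, hmax, ?_, ?_⟩
  · intro X hX y hy
    refine ⟨hmax y hy, ?_⟩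
    have hXS : X ∈ SymM n := by
      have := hX.2.isHermitian
      show Xᵀ = X
      simpa [Matrix.IsHermitian, Matrix.conjTranspose_eq_transpose_of_trivial] using this
    have h1 := hglob X hXS
    have h2 := hfo X hX
    rw [mip_comm', mip_sub_right'] at h2
    rw [hfdef, hfdef]
    simp only [F] at h1
    linarith
  · have hmem : G - Aadj ys ∈ subdiff h0 Xs := by
      refine ⟨hG.1.sub (hAs ys), ?_⟩
      intro Y hY
      have h1 := hglob Y hY
      have h2 := hAadj Y hY ys
      have h3 := hAadj Xs hXsym ys
      rw [real_inner_comm] at h2 h3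
      simp only [F, inner_sub_right] at h1
      rw [mip_sub_left', mip_sub_right', mip_sub_right']
      linarith
    rw [hgh Xs hXsym] at hmem
    rw [← Set.mem_singleton_iff.mp hmem]
    simp
end
end
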